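/- Assume the stated hypotheses on Ω and u. Then for every ε > 0 there exists C_ε > 0 such that for every (x,t) ∈ Ω_{δ₀} × [T/2, T] and all unit vectors τ, τ̂ orthogonal to ν(x), one has |∇u(x,t)·τ|^p + |τ·(D²u(x,t))ν(x)| + |τ·(D²u(x,t))τ̂| ≤ ε δ(x)^{−βp} + C_ε. -/

import Mathlib

open Set Metric Filter RealInnerProductSpace

noncomputable section

set_option linter.unusedVariables false

/-- A set `Ω ⊆ ℝⁿ` has boundary of class `C²`: near each boundary point, `Ω` is the strict
sublevel set of a `C²` function with nonvanishing gradient (equivalently, after a rigid motion,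
the boundary is locally the graph of a `C²` function with `Ω` strictly on one side). -/
def IsC2Boundary {n : ℕ} (Ω : Set (EuclideanSpace ℝ (Fin n))) : Prop :=
  ∀ x ∈ frontier Ω, ∃ f : EuclideanSpace ℝ (Fin n) → ℝ, ∃ U ∈ nhds x,
    ContDiffOn ℝ 2 f U ∧ (∀ y ∈ U, fderiv ℝ f y ≠ 0) ∧
    U ∩ Ω = U ∩ {y | f y < 0} ∧ U ∩ frontier Ω = U ∩ {y | f y = 0}

open scoped Topology
set_option linter.unusedSectionVars false
set_option linter.unusedSimpArgs false

section General
variable {E : Type*} [NormedAddCommGroup E] [InnerProductSpace ℝ E] [FiniteDimensional ℝ E]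

lemma line_second_deriv {g g1 : ℝ → ℝ} {a : ℝ} (h1 : ∀ᶠ σ in 𝓝 (0:ℝ), HasDerivAt g (g1 σ) σ)
    (h2 : HasDerivAt g1 a 0) (hm : IsLocalMax g 0) : g1 0 = 0 ∧ a ≤ 0 := by
  have h0 : g1 0 = 0 := hm.hasDerivAt_eq_zero h1.self_of_nhds
  refine ⟨h0, ?_⟩
  by_contra! ha
  have hd : deriv g =ᶠ[𝓝 0] g1 := h1.mono fun σ h => h.deriv
  have hdd : deriv (deriv g) 0 = a := by rw [hd.deriv_eq]; exact h2.deriv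
  have hmin : IsLocalMin g 0 := isLocalMin_of_deriv_deriv_pos (by rw [hdd]; exact ha)
    (by rw [hd.eq_of_nhds, h0]) h1.self_of_nhds.continuousAt
  have hc : g =ᶠ[𝓝 0] fun _ => g 0 := by
    filter_upwards [hm, hmin] with σ h h' using le_antisymm h h'
  have hd0 : deriv g =ᶠ[𝓝 0] fun _ => 0 := by
    have := hc.deriv
    simpa using this
  have : deriv (deriv g) 0 = 0 := by rw [hd0.deriv_eq]; simp
  linarith

lemma grad_line {v : E → ℝ} {g : E} {x d : E} {σ : ℝ} (h : HasGradientAt v g (x + σ • d)) :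
    HasDerivAt (fun s : ℝ => v (x + s • d)) ⟪g, d⟫ σ := by
  have h1 : HasDerivAt (fun s : ℝ => x + s • d) d σ := by
    simpa using ((hasDerivAt_id σ).smul_const d).const_add x
  have h3 : HasDerivAt (fun s : ℝ => v (x + s • d)) ((InnerProductSpace.toDual ℝ E g) d) σ :=
    h.hasFDerivAt.comp_hasDerivAt σ h1
  exact h3.congr_deriv (by simp)

lemma hess_line {G : E → E} {A : E →L[ℝ] E} {x d : E} {σ : ℝ} (h : HasFDerivAt G A (x + σ • d)) (e : E) :
    HasDerivAt (fun s : ℝ => ⟪G (x + s • d), e⟫) ⟪A d, e⟫ σ := by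
  have h1 : HasDerivAt (fun s : ℝ => x + s • d) d σ := by
    simpa using ((hasDerivAt_id σ).smul_const d).const_add x
  have := h.comp_hasDerivAt σ h1
  simpa using this.inner ℝ (hasDerivAt_const σ e)

lemma tendsto_line (x d : E) : Tendsto (fun s : ℝ => x + s • d) (𝓝 0) (𝓝 x) := by
  have : Continuous (fun s : ℝ => x + s • d) := by fun_prop
  simpa using this.tendsto 0

lemma trace_basis {n : ℕ} (e e' : OrthonormalBasis (Fin n) ℝ E) (A : E →L[ℝ] E) :
    ∑ i, ⟪A (e i), e i⟫ = ∑ i, ⟪A (e' i), e' i⟫ := by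
  have h := LinearMap.trace_eq_sum_inner (A : E →ₗ[ℝ] E) e
  have h' := LinearMap.trace_eq_sum_inner (A : E →ₗ[ℝ] E) e'
  rw [h] at h'
  simpa [real_inner_comm] using h'

/-- interior gradient estimate for the heat equation (Brandt) -/
lemma heat_grad {n : ℕ} (e : OrthonormalBasis (Fin n) ℝ E) (w : E → ℝ → ℝ) (Gw : E → ℝ → E)
    (Hw : E → ℝ → E →L[ℝ] E) (w' : E → ℝ → ℝ) (x0 : E) (t0 r m N : ℝ) (hr : 0 < r)
    (hc : ContinuousOn (fun q : E × ℝ => w q.1 q.2) (closedBall x0 r ×ˢ Icc (t0 - r^2) t0))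
    (h1 : ∀ t ∈ Icc (t0 - r^2) t0, ∀ x ∈ closedBall x0 r, HasGradientAt (fun y => w y t) (Gw x t) x)
    (h2 : ∀ t ∈ Icc (t0 - r^2) t0, ∀ x ∈ closedBall x0 r, HasFDerivAt (fun y => Gw y t) (Hw x t) x)
    (h3 : ∀ t ∈ Icc (t0 - r^2) t0, ∀ x ∈ closedBall x0 r, HasDerivAt (fun s => w x s) (w' x t) t)
    (hf : ∀ t ∈ Icc (t0 - r^2) t0, ∀ x ∈ closedBall x0 r,
      |w' x t - ∑ i, ⟪Hw x t (e i), e i⟫| ≤ N)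
    (hm : ∀ t ∈ Icc (t0 - r^2) t0, ∀ x ∈ closedBall x0 r, |w x t| ≤ m)
    (ξ : E) (hξ : ‖ξ‖ = 1) :
    ⟪Gw x0 t0, ξ⟫ ≤ 2 * r * (m * (2 * n + 1) / r^2 + N) := by
  have ht0 : t0 ∈ Icc (t0 - r^2) t0 := ⟨by nlinarith, le_rfl⟩
  have hx0 : x0 ∈ closedBall x0 r := mem_closedBall_self hr.le
  have hm0 : 0 ≤ m := (abs_nonneg _).trans (hm t0 ht0 x0 hx0)
  have hN0 : 0 ≤ N := (abs_nonneg _).trans (hf t0 ht0 x0 hx0)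
  suffices H : ∀ κ > 0, ⟪Gw x0 t0, ξ⟫ ≤ 2 * r * (m * (2 * n + 1) / r^2 + N + κ) by
    have hlim : Tendsto (fun κ : ℝ => 2 * r * (m * (2 * n + 1) / r^2 + N + κ)) (𝓝[>] 0)
        (𝓝 (2 * r * (m * (2 * n + 1) / r^2 + N))) := by
      have : Continuous (fun κ : ℝ => 2 * r * (m * (2 * n + 1) / r^2 + N + κ)) := by fun_prop
      have := this.tendsto 0
      simp only [add_zero] at this
      exact this.mono_left nhdsWithin_le_nhds
    exact ge_of_tendsto hlim (by filter_upwards [self_mem_nhdsWithin] with κ hκ using H κ hκ)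
  intro κ hκ
  set K := m * (2 * n + 1) / r^2 + N + κ with hK
  have hKpos : 0 < K := by positivity
  let L : E ≃ₗᵢ[ℝ] E := (ℝ ∙ ξ)ᗮ.reflection
  have hL : ∀ v, L v = v - (2 * ⟪ξ, v⟫) • ξ := by
    intro v
    simp only [L, Submodule.reflection_orthogonal_apply, Submodule.reflection_singleton_apply, hξ]
    simp [mul_smul, two_smul]
  let ρ : E → E := fun x => x0 + L (x - x0)
  have hρc : Continuous ρ := by fun_prop
  have hρn : ∀ x, ‖ρ x - x0‖ = ‖x - x0‖ := by intro x; simp only [ρ, add_sub_cancel_left]; exact L.norm_map _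
  have hρb : ∀ x ∈ closedBall x0 r, ρ x ∈ closedBall x0 r := by
    intro x hx; rw [mem_closedBall, dist_eq_norm] at *; rwa [hρn]
  let ψ : E → ℝ → ℝ := fun x t => m / r^2 * (‖x - x0‖^2 + (t0 - t)) +
    K * (2 * r * ⟪x - x0, ξ⟫ - ⟪x - x0, ξ⟫^2)
  let Φ : E → ℝ → ℝ := fun x t => w x t - w (ρ x) t - 2 * ψ x t
  let S : Set (E × ℝ) := (closedBall x0 r ∩ {x | 0 ≤ ⟪x - x0, ξ⟫}) ×ˢ Icc (t0 - r^2) t0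
  have hScomp : IsCompact S := by
    apply IsCompact.prod _ isCompact_Icc
    apply (isCompact_closedBall x0 r).inter_right
    exact isClosed_le continuous_const (by fun_prop)
  have hSsub : S ⊆ closedBall x0 r ×ˢ Icc (t0 - r^2) t0 := fun q hq => ⟨hq.1.1, hq.2⟩
  have hΦc : ContinuousOn (fun q : E × ℝ => Φ q.1 q.2) S := by
    refine ((hc.mono hSsub).sub ?_).sub (Continuous.continuousOn (by fun_prop))
    have : ContinuousOn (fun q : E × ℝ => (ρ q.1, q.2)) S := (by fun_prop : Continuous _).continuousOn
    exact hc.comp this (fun q hq => ⟨hρb _ hq.1.1, hq.2⟩)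
  have hS0 : (x0, t0) ∈ S := ⟨⟨hx0, by simp⟩, ht0⟩
  obtain ⟨⟨xh, th⟩, hmem, hmax⟩ := hScomp.exists_isMaxOn ⟨_, hS0⟩ hΦc
  have hmax' : ∀ x t, (x, t) ∈ S → Φ x t ≤ Φ xh th := fun x t h => hmax h
  obtain ⟨⟨hxb, hxs⟩, htI⟩ := hmem
  simp only [mem_ofPred_eq] at hxb hxs htI
  have hcs : ∀ x ∈ closedBall x0 r, ⟪x - x0, ξ⟫ ≤ r := by
    intro x hx
    have h := real_inner_le_norm (x - x0) ξ
    rw [mem_closedBall, dist_eq_norm] at hx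
    rw [hξ] at h; linarith
  have hneg : Φ xh th ≤ 0 := by
    by_contra! hpos
    have hψ0 : ∀ c : ℝ, 0 ≤ c → c ≤ r → 0 ≤ K * (2 * r * c - c^2) := by
      intro c h0 h1
      apply mul_nonneg hKpos.le; nlinarith
    have hA := hψ0 _ hxs (hcs _ hxb)
    have hmr : 0 ≤ m / r^2 := by positivity
    have htt : 0 ≤ t0 - th := by linarith [htI.2]
    have hw1 := hm th htI xh hxb
    have hw2 := hm th htI _ (hρb xh hxb)
    rw [abs_le] at hw1 hw2
    -- interior
    have hlt : ‖xh - x0‖ < r := by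
      rw [mem_closedBall, dist_eq_norm] at hxb
      refine lt_of_le_of_ne hxb fun heq => ?_
      have : m / r^2 * (‖xh - x0‖^2 + (t0 - th)) ≥ m := by
        rw [heq]
        have : m / r^2 * (r^2 + (t0 - th)) = m + m / r^2 * (t0 - th) := by field_simp
        rw [this]; nlinarith
      simp only [Φ, ψ] at hpos
      linarith
    have hspos : 0 < ⟪xh - x0, ξ⟫ := by
      refine lt_of_le_of_ne hxs fun heq => ?_
      have hρx : ρ xh = xh := by
        simp only [ρ, hL]; rw [real_inner_comm, ← heq]; simp
      simp only [Φ, ψ, hρx] at hpos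
      have : 0 ≤ m / r^2 * (‖xh - x0‖^2 + (t0 - th)) := by positivity
      linarith
    have htlt : t0 - r^2 < th := by
      refine lt_of_le_of_ne htI.1 fun heq => ?_
      have : m / r^2 * (‖xh - x0‖^2 + (t0 - th)) ≥ m := by
        rw [← heq]
        have : m / r^2 * (‖xh - x0‖^2 + (t0 - (t0 - r^2))) = m + m / r^2 * ‖xh - x0‖^2 := by
          field_simp; ring
        rw [this]
        have : 0 ≤ m / r^2 * ‖xh - x0‖^2 := by positivity
        linarith
      simp only [Φ, ψ] at hpos
      linarith
    -- time derivative
    have htime : 0 ≤ w' xh th - w' (ρ xh) th + 2 * (m / r^2) := by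
      have hd : HasDerivAt (fun s => Φ xh s) (w' xh th - w' (ρ xh) th - 2 * (m / r^2 * (-1))) th := by
        refine ((h3 th htI xh hxb).sub (h3 th htI _ (hρb _ hxb))).sub ?_
        refine HasDerivAt.const_mul 2 ?_
        refine HasDerivAt.add_const _ ?_
        refine HasDerivAt.const_mul _ ?_
        refine HasDerivAt.const_add _ ?_
        simpa using (hasDerivAt_id th).const_sub t0
      by_contra! hlt0
      have hev := hd.hasDerivWithinAt (s := Iio th)
      have hsl := (hasDerivWithinAt_iff_tendsto_slope' (by simp)).1 hev
      have hneg' := hsl.eventually_lt_const (u := 0) (by linarith)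
      have hI : ∀ᶠ s in 𝓝[<] th, s ∈ Ioo (t0 - r^2) th := Ioo_mem_nhdsLT htlt
      obtain ⟨s, hs1, hs2⟩ := (hneg'.and hI).exists
      have hle := hmax' xh s ⟨⟨hxb, hxs⟩, ⟨hs2.1.le, hs2.2.le.trans htI.2⟩⟩
      rw [slope_def_field, div_neg_iff] at hs1
      rcases hs1 with h | h <;> linarith [hs2.2]
    -- spatial second derivatives
    have hspace : ∀ d : E, ‖d‖ = 1 → ⟪Hw xh th d, d⟫ - ⟪Hw (ρ xh) th (L d), L d⟫
        - 2 * (2 * (m / r^2) - 2 * K * ⟪d, ξ⟫^2) ≤ 0 := by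
      intro d hd
      have hρl : ∀ s : ℝ, ρ (xh + s • d) = ρ xh + s • L d := by
        intro s; simp only [ρ]
        rw [show xh + s • d - x0 = (xh - x0) + s • d by abel, map_add, map_smul]; abel
      have hball : ∀ᶠ s in 𝓝 (0:ℝ), xh + s • d ∈ ball x0 r ∩ {x | 0 < ⟪x - x0, ξ⟫} := by
        apply (tendsto_line xh d).eventually
        apply IsOpen.mem_nhds
        · exact isOpen_ball.inter (isOpen_lt continuous_const (by fun_prop))
        · exact ⟨by rwa [mem_ball, dist_eq_norm], hspos⟩
      let ψ1 : ℝ → ℝ := fun s => m / r^2 * (2 * ⟪xh - x0, d⟫ + 2 * s) +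
        K * (2 * r * ⟪d, ξ⟫ - 2 * (⟪xh - x0, ξ⟫ + s * ⟪d, ξ⟫) * ⟪d, ξ⟫)
      have hψline : ∀ s : ℝ, ψ (xh + s • d) th = m / r^2 * (‖xh - x0‖^2 + 2 * s * ⟪xh - x0, d⟫ + s^2 + (t0 - th)) +
          K * (2 * r * (⟪xh - x0, ξ⟫ + s * ⟪d, ξ⟫) - (⟪xh - x0, ξ⟫ + s * ⟪d, ξ⟫)^2) := by
        intro s
        simp only [ψ]
        rw [show xh + s • d - x0 = (xh - x0) + s • d by abel, norm_add_sq_real, inner_add_left,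
          inner_smul_left, inner_smul_right, norm_smul, hd]
        simp
        left; ring
      have hψd : ∀ s : ℝ, HasDerivAt (fun s : ℝ => ψ (xh + s • d) th) (ψ1 s) s := by
        intro s
        simp_rw [hψline]
        have hid := hasDerivAt_id s
        have hlin := (hid.mul_const ⟪d, ξ⟫).const_add ⟪xh - x0, ξ⟫
        have hA := ((((hid.const_mul 2).mul_const ⟪xh - x0, d⟫).const_add (‖xh - x0‖^2)).add (hid.pow 2)).add_const (t0 - th)
        have := (hA.const_mul (m / r^2)).add (((hlin.const_mul (2*r)).sub (hlin.pow 2)).const_mul K)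
        refine this.congr_deriv ?_
        simp [ψ1]
      have hψ2 : HasDerivAt ψ1 (2 * (m / r^2) - 2 * K * ⟪d, ξ⟫^2) 0 := by
        have hid := hasDerivAt_id (0:ℝ)
        have hlin := (hid.mul_const ⟪d, ξ⟫).const_add ⟪xh - x0, ξ⟫
        have := (((hid.const_mul 2).const_add (2 * ⟪xh - x0, d⟫)).const_mul (m / r^2)).add
          ((((hlin.const_mul 2).mul_const ⟪d, ξ⟫).const_sub (2 * r * ⟪d, ξ⟫)).const_mul K)
        refine this.congr_deriv ?_
        simp; ring
      refine (line_second_deriv (g := fun s => Φ (xh + s • d) th)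
        (g1 := fun s => ⟪Gw (xh + s • d) th, d⟫ - ⟪Gw (ρ xh + s • L d) th, L d⟫ - 2 * ψ1 s) ?_ ?_ ?_).2
      · filter_upwards [hball] with s hs
        have hs' := ball_subset_closedBall hs.1
        have hs'' := hρb _ hs'
        rw [hρl] at hs''
        have hA := grad_line (h1 th htI _ hs')
        have hB := grad_line (h1 th htI _ hs'')
        have := (hA.sub hB).sub ((hψd s).const_mul 2)
        refine this.congr_of_eventuallyEq (Eventually.of_forall fun s => ?_)
        simp only [Φ, hρl, Pi.sub_apply]
      · have hA := hess_line (σ := 0) (d := d) (x := xh) (by simpa using h2 th htI xh hxb) d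
        have hB := hess_line (σ := 0) (d := L d) (x := ρ xh) (by simpa using h2 th htI _ (hρb xh hxb)) (L d)
        exact (hA.sub hB).sub (hψ2.const_mul 2)
      · filter_upwards [hball] with s hs
        simp only [zero_smul, add_zero]
        have hs2 : 0 < ⟪xh + s • d - x0, ξ⟫ := hs.2
        exact hmax' _ _ ⟨⟨ball_subset_closedBall hs.1, hs2.le⟩, htI⟩
    have hsum : ∑ i, (⟪Hw xh th (e i), e i⟫ - ⟪Hw (ρ xh) th (L (e i)), L (e i)⟫
        - 2 * (2 * (m / r^2) - 2 * K * ⟪e i, ξ⟫^2)) ≤ 0 :=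
      Finset.sum_nonpos fun i _ => hspace _ (e.orthonormal.1 i)
    have htr := trace_basis e (e.map L) (Hw (ρ xh) th)
    have hpars : ∑ i, ⟪e i, ξ⟫^2 = 1 := by
      have := e.sum_sq_norm_inner_right ξ
      simpa [hξ] using this
    simp only [OrthonormalBasis.map_apply] at htr
    simp only [Finset.sum_sub_distrib, ← Finset.mul_sum, hpars, ← htr] at hsum
    simp only [Finset.sum_const, Finset.card_univ, Fintype.card_fin, nsmul_eq_mul] at hsum
    have hf1 := abs_le.1 (hf th htI xh hxb)
    have hf2 := abs_le.1 (hf th htI _ (hρb xh hxb))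
    have hKe : K = (m / r^2) * (2 * n + 1) + N + κ := by rw [hK]; ring
    have : 0 ≤ (m/r^2) * (2 * n + 1) := by positivity
    nlinarith
  -- conclude
  have hfin : ∀ s ∈ Ioc (0:ℝ) r, w (x0 + s • ξ) t0 - w (x0 - s • ξ) t0 ≤
      2 * (m / r^2 * s^2 + K * (2 * r * s - s^2)) := by
    intro s hs
    have hmemS : (x0 + s • ξ, t0) ∈ S := by
      refine ⟨⟨?_, ?_⟩, ht0⟩
      · simp [mem_closedBall, dist_eq_norm, norm_smul, hξ, abs_of_pos hs.1, hs.2]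
      · simp [inner_smul_left, hξ, hs.1.le]
    have h := (hmax' _ _ hmemS).trans hneg
    have hρx : ρ (x0 + s • ξ) = x0 - s • ξ := by
      simp only [ρ, hL, add_sub_cancel_left, inner_smul_right, real_inner_self_eq_norm_sq, hξ]
      rw [show (2 * (s * 1^2)) • ξ = s • ξ + s • ξ by rw [← add_smul]; ring_nf]
      abel
    simp only [Φ, ψ, hρx, add_sub_cancel_left, norm_smul, hξ, inner_smul_left,
      real_inner_self_eq_norm_sq] at h
    simp at h
    linarith
  have hd : HasDerivAt (fun s : ℝ => w (x0 + s • ξ) t0 - w (x0 - s • ξ) t0) (2 * ⟪Gw x0 t0, ξ⟫) 0 := by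
    have hA := grad_line (σ := 0) (d := ξ) (x := x0) (by simpa using h1 t0 ht0 x0 hx0)
    have hB := grad_line (σ := 0) (d := -ξ) (x := x0) (by simpa using h1 t0 ht0 x0 hx0)
    have := (hA.sub hB).congr_deriv (g' := 2 * ⟪Gw x0 t0, ξ⟫) (by rw [inner_neg_right]; ring)
    refine this.congr_of_eventuallyEq (Eventually.of_forall fun s => ?_)
    simp only [Pi.sub_apply, smul_neg, sub_eq_add_neg]
  have hsl := (hasDerivWithinAt_iff_tendsto_slope' (by simp)).1 (hd.hasDerivWithinAt (s := Ioi 0))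
  have hlim : Tendsto (fun s : ℝ => 2 * (m / r^2 * s + K * (2 * r - s))) (𝓝[>] 0) (𝓝 (2 * (K * (2 * r)))) := by
    have : Continuous (fun s : ℝ => 2 * (m / r^2 * s + K * (2 * r - s))) := by fun_prop
    have := this.tendsto 0
    simp only [mul_zero, zero_add, sub_zero] at this
    exact this.mono_left nhdsWithin_le_nhds
  have := le_of_tendsto_of_tendsto hsl hlim (by
    filter_upwards [Ioc_mem_nhdsGT hr] with s hs
    rw [slope_def_field]
    simp only [zero_smul, add_zero, sub_zero, sub_self]
    rw [div_le_iff₀ hs.1]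
    have := hfin s hs
    nlinarith)
  linarith

end General

lemma rpow_lip {p L a b : ℝ} (hp : 1 ≤ p) (ha : 0 ≤ a) (hb : 0 ≤ b) (haL : a ≤ L) (hbL : b ≤ L) :
    |a ^ p - b ^ p| ≤ p * L ^ (p - 1) * |a - b| := by
  have := Convex.norm_image_sub_le_of_norm_hasDerivWithin_le (f := fun x : ℝ => x ^ p)
    (f' := fun x => p * x ^ (p - 1)) (s := Icc 0 L) (C := p * L ^ (p - 1)) (x := b) (y := a)
    (fun x hx => (Real.hasDerivAt_rpow_const (Or.inr hp)).hasDerivWithinAt)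
    (fun x hx => by
      have h1 : 0 ≤ x ^ (p - 1) := Real.rpow_nonneg hx.1 _
      rw [Real.norm_eq_abs, abs_of_nonneg (by positivity)]
      exact mul_le_mul_of_nonneg_left (Real.rpow_le_rpow hx.1 hx.2 (by linarith)) (by linarith))
    (convex_Icc 0 L) ⟨hb, hbL⟩ ⟨ha, haL⟩
  simpa [Real.norm_eq_abs] using this

lemma rpow_norm_lip {E : Type*} [NormedAddCommGroup E] {p L : ℝ} {a b : E} (hp : 1 ≤ p) (haL : ‖a‖ ≤ L) (hbL : ‖b‖ ≤ L) :
    |‖a‖ ^ p - ‖b‖ ^ p| ≤ p * L ^ (p - 1) * ‖a - b‖ := by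
  refine (rpow_lip hp (norm_nonneg a) (norm_nonneg b) haL hbL).trans ?_
  have hL : 0 ≤ L := (norm_nonneg a).trans haL
  have : 0 ≤ L ^ (p - 1) := Real.rpow_nonneg hL _
  exact mul_le_mul_of_nonneg_left (abs_norm_sub_norm_le a b) (by positivity)

lemma mv_line {F : Type*} [NormedAddCommGroup F] [NormedSpace ℝ F] {g g' : ℝ → F} {h m : ℝ} (hh : 0 ≤ h)
    (hd : ∀ σ ∈ Icc 0 h, HasDerivAt g (g' σ) σ) (hm : ∀ σ ∈ Icc 0 h, ‖g' σ‖ ≤ m) : ‖g h - g 0‖ ≤ m * h := by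
  have := norm_image_sub_le_of_norm_deriv_le_segment' (f := g) (f' := g') (a := 0) (b := h) (C := m)
    (fun x hx => (hd x hx).hasDerivWithinAt) (fun x hx => hm x ⟨hx.1, hx.2.le⟩) h ⟨hh, le_rfl⟩
  simpa using this

section General
variable {E : Type*} [NormedAddCommGroup E] [InnerProductSpace ℝ E] [FiniteDimensional ℝ E]

lemma field_line {G : E → E} {A : E →L[ℝ] E} {x d : E} {σ : ℝ} (h : HasFDerivAt G A (x + σ • d)) :
    HasDerivAt (fun s : ℝ => G (x + s • d)) (A d) σ := by
  have h1 : HasDerivAt (fun s : ℝ => x + s • d) d σ := by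
    simpa using ((hasDerivAt_id σ).smul_const d).const_add x
  exact h.comp_hasDerivAt σ h1

/-- gradient and field composed with a translation -/
lemma grad_shift {v : E → ℝ} {g x a : E} (h : HasGradientAt v g (x + a)) :
    HasGradientAt (fun y => v (y + a)) g x := by
  rw [hasGradientAt_iff_hasFDerivAt] at *
  exact (h.comp x ((hasFDerivAt_id x).add_const a)).congr_fderiv (by ext; simp)

lemma field_shift {G : E → E} {A : E →L[ℝ] E} {x a : E} (h : HasFDerivAt G A (x + a)) :
    HasFDerivAt (fun y => G (y + a)) A x := by
  exact (h.comp x ((hasFDerivAt_id x).add_const a)).congr_fderiv (by ext; simp)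

lemma grad_sub {v v2 : E → ℝ} {g g2 x : E} (h : HasGradientAt v g x) (h2 : HasGradientAt v2 g2 x) :
    HasGradientAt (fun y => v y - v2 y) (g - g2) x := by
  rw [hasGradientAt_iff_hasFDerivAt] at *
  rw [map_sub]
  exact h.sub h2

lemma norm_le_of_inner {a : E} {c : ℝ} (hc : 0 ≤ c) (h : ∀ ξ : E, ‖ξ‖ = 1 → ⟪a, ξ⟫ ≤ c) : ‖a‖ ≤ c := by
  by_cases ha : a = 0
  · simpa [ha] using hc
  · have hn : ‖a‖ ≠ 0 := by simpa using ha
    have := h (‖a‖⁻¹ • a) (by rw [norm_smul]; simp [hn])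
    rw [inner_smul_right, real_inner_self_eq_norm_sq, sq, ← mul_assoc, inv_mul_cancel₀ hn, one_mul] at this
    exact this

set_option maxHeartbeats 1000000 in
lemma hess_est {n : ℕ} (e : OrthonormalBasis (Fin n) ℝ E) (u : E → ℝ → ℝ) (G : E → ℝ → E)
    (H : E → ℝ → E →L[ℝ] E) (u' : E → ℝ → ℝ) (x0 : E) (t0 r m L Kc p : ℝ) (hr : 0 < r) (hp : 1 ≤ p)
    (hc : ContinuousOn (fun q : E × ℝ => u q.1 q.2) (closedBall x0 r ×ˢ Icc (t0 - r^2) t0))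
    (hHc : ContinuousOn (fun q : E × ℝ => H q.1 q.2) (closedBall x0 r ×ˢ Icc (t0 - r^2) t0))
    (h1 : ∀ t ∈ Icc (t0 - r^2) t0, ∀ x ∈ closedBall x0 r, HasGradientAt (fun y => u y t) (G x t) x)
    (h2 : ∀ t ∈ Icc (t0 - r^2) t0, ∀ x ∈ closedBall x0 r, HasFDerivAt (fun y => G y t) (H x t) x)
    (h3 : ∀ t ∈ Icc (t0 - r^2) t0, ∀ x ∈ closedBall x0 r, HasDerivAt (fun s => u x s) (u' x t) t)
    (hpde : ∀ t ∈ Icc (t0 - r^2) t0, ∀ x ∈ closedBall x0 r,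
      u' x t - ∑ i, ⟪H x t (e i), e i⟫ = ‖G x t‖ ^ p)
    (d : E) (hd : ‖d‖ = 1)
    (hm : ∀ t ∈ Icc (t0 - r^2) t0, ∀ x ∈ closedBall x0 r, |⟪G x t, d⟫| ≤ m)
    (hL : ∀ t ∈ Icc (t0 - r^2) t0, ∀ x ∈ closedBall x0 r, ‖G x t‖ ≤ L)
    (hKc : L ^ (p - 1) * r ≤ Kc) :
    ‖H x0 t0 d‖ ≤ 4 * (2 * n + 1) * (4 + 8 * p * Kc) * m / r := by
  have ht0 : t0 ∈ Icc (t0 - r^2) t0 := ⟨by nlinarith, le_rfl⟩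
  have hx0 : x0 ∈ closedBall x0 r := mem_closedBall_self hr.le
  have hm0 : 0 ≤ m := (abs_nonneg _).trans (hm t0 ht0 x0 hx0)
  have hL0 : 0 ≤ L := (norm_nonneg _).trans (hL t0 ht0 x0 hx0)
  have hLp : 0 ≤ L ^ (p - 1) := Real.rpow_nonneg hL0 _
  have hKc0 : 0 ≤ Kc := le_trans (by positivity) hKc
  set Q := closedBall x0 r ×ˢ Icc (t0 - r^2) t0 with hQ
  let D : E → ℝ → ℝ := fun x t => min (r - ‖x - x0‖) (Real.sqrt (t - (t0 - r^2)))
  have hQc : IsCompact Q := (isCompact_closedBall x0 r).prod isCompact_Icc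
  have hFc : ContinuousOn (fun q : E × ℝ => D q.1 q.2 * ‖H q.1 q.2 d‖) Q := by
    apply ContinuousOn.mul (Continuous.continuousOn (by fun_prop))
    exact (hHc.clm_apply continuousOn_const).norm
  obtain ⟨⟨xh, th⟩, ⟨hxb, htI⟩, hmax⟩ := hQc.exists_isMaxOn ⟨(x0, t0), hx0, ht0⟩ hFc
  have hmax' : ∀ t ∈ Icc (t0 - r^2) t0, ∀ x ∈ closedBall x0 r, D x t * ‖H x t d‖ ≤ D xh th * ‖H xh th d‖ :=
    fun t ht x hx => hmax (show (x, t) ∈ Q from ⟨hx, ht⟩)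
  simp only at hxb htI
  set Dh := D xh th with hDh
  set S := Dh * ‖H xh th d‖ with hS
  have hD0 : D x0 t0 = r := by
    simp only [D, sub_self, norm_zero, sub_zero, sub_sub_cancel, Real.sqrt_sq hr.le, min_self]
  have hcen := hmax' t0 ht0 x0 hx0
  rw [hD0] at hcen
  have hDr : Dh ≤ r := (min_le_left _ _).trans (by linarith [norm_nonneg (xh - x0)])
  set θ : ℝ := 1 / (4 + 8 * p * Kc) with hθ
  have hden : 0 < 4 + 8 * p * Kc := by positivity
  have hθ0 : 0 < θ := by positivity
  have hθ4 : θ ≤ 1/4 := by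
    rw [hθ]; apply one_div_le_one_div_of_le <;> nlinarith [mul_nonneg (by linarith : 0 ≤ p) hKc0]
  have hθK : θ * (8 * p * Kc) ≤ 1 := by
    rw [hθ, one_div, inv_mul_le_iff₀ hden]; linarith
  -- main claim
  have hSle : S ≤ 2 * (2 * (2 * n + 1) * m / θ) := by
    by_cases hDpos : Dh ≤ 0
    · have : S ≤ 0 := mul_nonpos_of_nonpos_of_nonneg hDpos (norm_nonneg _)
      exact this.trans (by positivity)
    push Not at hDpos
    have hDx : ‖xh - x0‖ ≤ r - Dh := by
      have : Dh ≤ r - ‖xh - x0‖ := min_le_left _ _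
      linarith
    have hDt : Dh^2 ≤ th - (t0 - r^2) := by
      have h : Dh ≤ Real.sqrt (th - (t0 - r^2)) := min_le_right _ _
      exact (Real.le_sqrt hDpos.le (by linarith [htI.1])).1 h
    set ρ := θ * Dh with hρ
    have hρ0 : 0 < ρ := by positivity
    have hρD : ρ ≤ Dh / 4 := by rw [hρ]; nlinarith
    have hsubx : ∀ x, ‖x - xh‖ ≤ 2 * ρ → x ∈ closedBall x0 r := by
      intro x hx
      rw [mem_closedBall, dist_eq_norm]
      calc ‖x - x0‖ = ‖(x - xh) + (xh - x0)‖ := by congr 1; abel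
        _ ≤ _ := norm_add_le _ _
        _ ≤ r := by linarith
    have hsubt : ∀ t ∈ Icc (th - ρ^2) th, t ∈ Icc (t0 - r^2) t0 := by
      intro t ht
      refine ⟨?_, ht.2.trans htI.2⟩
      nlinarith [ht.1]
    have hDlow : ∀ t ∈ Icc (th - ρ^2) th, ∀ x, ‖x - xh‖ ≤ 2 * ρ → Dh / 2 ≤ D x t := by
      intro t ht x hx
      apply le_min
      · have : ‖x - x0‖ ≤ ‖x - xh‖ + ‖xh - x0‖ := by
          calc ‖x - x0‖ = ‖(x - xh) + (xh - x0)‖ := by congr 1; abel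
            _ ≤ _ := norm_add_le _ _
        linarith
      · apply Real.le_sqrt_of_sq_le
        nlinarith [ht.1]
    have hHb : ∀ t ∈ Icc (th - ρ^2) th, ∀ x, ‖x - xh‖ ≤ 2 * ρ → ‖H x t d‖ ≤ 2 * S / Dh := by
      intro t ht x hx
      have h := hmax' t (hsubt t ht) x (hsubx x hx)
      rw [le_div_iff₀ hDpos]
      nlinarith [hDlow t ht x hx, norm_nonneg (H x t d)]
    have hS0 : 0 ≤ S := by positivity
    set B := 2 * S / Dh with hB
    have hB0 : 0 ≤ B := by positivity
    set N := p * L ^ (p - 1) * B with hN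
    have hN0 : 0 ≤ N := by positivity
    -- difference estimate
    have hdiff : ∀ h ∈ Ioo 0 ρ, ∀ ξ : E, ‖ξ‖ = 1 → ⟪G (xh + h • d) th - G xh th, ξ⟫ ≤
        2 * ρ * ((m * h) * (2 * n + 1) / ρ^2 + N * h) := by
      intro h hh ξ hξ
      have hseg : ∀ x ∈ closedBall xh ρ, ∀ σ ∈ Icc 0 h, ‖x + σ • d - xh‖ ≤ 2 * ρ := by
        intro x hx σ hσ
        rw [mem_closedBall, dist_eq_norm] at hx
        calc ‖x + σ • d - xh‖ = ‖(x - xh) + σ • d‖ := by congr 1; abel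
          _ ≤ ‖x - xh‖ + ‖σ • d‖ := norm_add_le _ _
          _ ≤ 2 * ρ := by
            rw [norm_smul, hd, Real.norm_eq_abs, abs_of_nonneg hσ.1]
            linarith [hσ.2, hh.2]
      have hsegh : ∀ x ∈ closedBall xh ρ, x + h • d ∈ closedBall x0 r := fun x hx =>
        hsubx _ (hseg x hx h ⟨hh.1.le, le_rfl⟩)
      have hseg0 : ∀ x ∈ closedBall xh ρ, x ∈ closedBall x0 r := fun x hx => by
        simpa using hsubx _ (hseg x hx 0 ⟨le_rfl, hh.1.le⟩)
      refine heat_grad e (fun x t => u (x + h • d) t - u x t) (fun x t => G (x + h • d) t - G x t)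
        (fun x t => H (x + h • d) t - H x t) (fun x t => u' (x + h • d) t - u' x t) xh th ρ (m * h) (N * h) hρ0
        ?_ ?_ ?_ ?_ ?_ ?_ ξ hξ
      · apply ContinuousOn.sub
        · have : ContinuousOn (fun q : E × ℝ => (q.1 + h • d, q.2)) (closedBall xh ρ ×ˢ Icc (th - ρ^2) th) :=
            (by fun_prop : Continuous _).continuousOn
          exact hc.comp this (fun q hq => ⟨hsegh _ hq.1, hsubt _ hq.2⟩)
        · exact hc.mono (fun q hq => ⟨hseg0 _ hq.1, hsubt _ hq.2⟩)
      · intro t ht x hx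
        exact grad_sub (grad_shift (h1 t (hsubt t ht) _ (hsegh x hx))) (h1 t (hsubt t ht) _ (hseg0 x hx))
      · intro t ht x hx
        exact (field_shift (G := fun y => G y t) (h2 t (hsubt t ht) _ (hsegh x hx))).sub (h2 t (hsubt t ht) _ (hseg0 x hx))
      · intro t ht x hx
        exact (h3 t (hsubt t ht) _ (hsegh x hx)).sub (h3 t (hsubt t ht) _ (hseg0 x hx))
      · intro t ht x hx
        have e1 := hpde t (hsubt t ht) _ (hsegh x hx)
        have e2 := hpde t (hsubt t ht) _ (hseg0 x hx)
        have e3 : u' (x + h • d) t - u' x t - ∑ i, ⟪(H (x + h • d) t - H x t) (e i), e i⟫ =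
            ‖G (x + h • d) t‖ ^ p - ‖G x t‖ ^ p := by
          simp only [_root_.sub_apply, inner_sub_left, Finset.sum_sub_distrib]
          linarith
        rw [e3]
        refine (rpow_norm_lip hp (hL t (hsubt t ht) _ (hsegh x hx)) (hL t (hsubt t ht) _ (hseg0 x hx))).trans ?_
        have hmv := mv_line (g := fun σ : ℝ => G (x + σ • d) t) (g' := fun σ => H (x + σ • d) t d) (m := B) hh.1.le
          (fun σ hσ => field_line (G := fun y => G y t) (h2 t (hsubt t ht) _ (hsubx _ (hseg x hx σ hσ))))
          (fun σ hσ => hHb t ht _ (hseg x hx σ hσ))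
        simp only [zero_smul, add_zero] at hmv
        calc _ ≤ p * L ^ (p - 1) * (B * h) := mul_le_mul_of_nonneg_left hmv (by positivity)
          _ = N * h := by rw [hN]; ring
      · intro t ht x hx
        have hmv := mv_line (g := fun σ : ℝ => u (x + σ • d) t) (g' := fun σ => ⟪G (x + σ • d) t, d⟫) (m := m) hh.1.le
          (fun σ hσ => grad_line (v := fun y => u y t) (h1 t (hsubt t ht) _ (hsubx _ (hseg x hx σ hσ))))
          (fun σ hσ => hm t (hsubt t ht) _ (hsubx _ (hseg x hx σ hσ)))
        simpa using hmv
    have hHh : ‖H xh th d‖ ≤ 2 * ρ * (m * (2 * n + 1) / ρ^2 + N) := by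
      apply norm_le_of_inner (by positivity)
      intro ξ hξ
      have hder := hess_line (G := fun y => G y th) (σ := 0) (d := d) (x := xh)
        (by simpa using h2 th htI xh hxb) ξ
      have hsl := (hasDerivWithinAt_iff_tendsto_slope' (by simp)).1 (hder.hasDerivWithinAt (s := Ioi 0))
      refine le_of_tendsto hsl ?_
      filter_upwards [Ioo_mem_nhdsGT hρ0] with h hh
      rw [slope_def_field]
      simp only [zero_smul, add_zero, sub_zero]
      rw [div_le_iff₀ hh.1, ← inner_sub_left]
      refine (hdiff h hh ξ hξ).trans (le_of_eq ?_)
      ring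
    have h5 : S ≤ 2 * (2 * n + 1) * m / θ + 4 * θ * p * (L ^ (p-1) * Dh) * S := by
      calc S ≤ Dh * (2 * ρ * (m * (2 * n + 1) / ρ^2 + N)) := mul_le_mul_of_nonneg_left hHh hDpos.le
        _ = _ := by rw [hN, hB, hρ]; field_simp; ring
    have h6 : 4 * θ * p * (L ^ (p-1) * Dh) * S ≤ S / 2 := by
      have : L ^ (p-1) * Dh ≤ Kc := le_trans (mul_le_mul_of_nonneg_left hDr hLp) hKc
      have h7 : 4 * θ * p * (L ^ (p-1) * Dh) ≤ 4 * θ * p * Kc := mul_le_mul_of_nonneg_left this (by positivity)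
      have h8 : 4 * θ * p * (L ^ (p-1) * Dh) ≤ 1/2 := by linarith
      nlinarith
    linarith
  rw [le_div_iff₀ hr]
  have : 2 * (2 * (2 * n + 1) * m / θ) = 4 * (2 * n + 1) * (4 + 8 * p * Kc) * m := by
    rw [hθ]; field_simp; ring
  linarith

end General

section General
variable {E : Type*} [NormedAddCommGroup E] [InnerProductSpace ℝ E] [FiniteDimensional ℝ E]

/-- flat box -/
def flatBox (ν : E) (a A R : ℝ) : Set E := {y | (a ≤ ⟪y, ν⟫ ∧ ⟪y, ν⟫ ≤ A) ∧ ‖y - ⟪y, ν⟫ • ν‖ ≤ R}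

lemma norm_tang_sq {ν y : E} (hν : ‖ν‖ = 1) : ‖y - ⟪y, ν⟫ • ν‖^2 = ‖y‖^2 - ⟪y, ν⟫^2 := by
  rw [norm_sub_sq_real, inner_smul_right, norm_smul, hν, mul_one, Real.norm_eq_abs, sq_abs]; ring

lemma flatBox_norm {ν : E} {a A R : ℝ} (hν : ‖ν‖ = 1) (ha : 0 ≤ a) {y : E} (hy : y ∈ flatBox ν a A R) : ‖y‖ ≤ A + R := by
  obtain ⟨⟨h1, h2⟩, h3⟩ := hy
  calc ‖y‖ = ‖⟪y, ν⟫ • ν + (y - ⟪y, ν⟫ • ν)‖ := by congr 1; abel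
    _ ≤ ‖⟪y, ν⟫ • ν‖ + ‖y - ⟪y, ν⟫ • ν‖ := norm_add_le _ _
    _ ≤ A + R := by
      rw [norm_smul, hν, mul_one, Real.norm_eq_abs, abs_of_nonneg (ha.trans h1)]; linarith

lemma flatBox_convex {ν : E} {a A R : ℝ} : Convex ℝ (flatBox ν a A R) := by
  have hlin : ∀ (x y : E) (s t : ℝ), ⟪s • x + t • y, ν⟫ = s * ⟪x, ν⟫ + t * ⟪y, ν⟫ := by
    intro x y s t; simp [inner_add_left, inner_smul_left]
  intro x hx y hy s t hs ht hst
  obtain ⟨⟨h1, h2⟩, h3⟩ := hx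
  obtain ⟨⟨k1, k2⟩, k3⟩ := hy
  have hc : ∀ c : ℝ, c = s * c + t * c := fun c => by rw [← add_mul, hst, one_mul]
  refine ⟨⟨?_, ?_⟩, ?_⟩
  · rw [hlin, hc a]; exact add_le_add (mul_le_mul_of_nonneg_left h1 hs) (mul_le_mul_of_nonneg_left k1 ht)
  · rw [hlin, hc A]; exact add_le_add (mul_le_mul_of_nonneg_left h2 hs) (mul_le_mul_of_nonneg_left k2 ht)
  · have : s • x + t • y - ⟪s • x + t • y, ν⟫ • ν = s • (x - ⟪x, ν⟫ • ν) + t • (y - ⟪y, ν⟫ • ν) := by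
      rw [hlin]; module
    rw [this]
    calc _ ≤ ‖s • (x - ⟪x, ν⟫ • ν)‖ + ‖t • (y - ⟪y, ν⟫ • ν)‖ := norm_add_le _ _
      _ = s * ‖x - ⟪x, ν⟫ • ν‖ + t * ‖y - ⟪y, ν⟫ • ν‖ := by
        rw [norm_smul, norm_smul, Real.norm_eq_abs, Real.norm_eq_abs, abs_of_nonneg hs, abs_of_nonneg ht]
      _ ≤ R := by rw [hc R]; exact add_le_add (mul_le_mul_of_nonneg_left h3 hs) (mul_le_mul_of_nonneg_left k3 ht)

set_option maxHeartbeats 1000000 in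
lemma flat_cmp {n : ℕ} (e : OrthonormalBasis (Fin n) ℝ E) (ν : E) (hν : ‖ν‖ = 1) (a A R η K σ m0 : ℝ)
    (ha : 0 ≤ a) (ha1 : a ≤ 1) (hA1 : 1 ≤ A) (hR : 0 < R) (hη : 0 < η) (hK : 0 ≤ K) (hm0 : 0 ≤ m0)
    (w : E → ℝ) (Gw : E → E) (Hw : E → E →L[ℝ] E)
    (h1 : ∀ y ∈ flatBox ν a A R, HasGradientAt w (Gw y) y)
    (h2 : ∀ y ∈ flatBox ν a A R, HasFDerivAt Gw (Hw y) y)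
    (hineq : ∀ y ∈ flatBox ν a A R, -(K * ‖Gw y‖) - σ ≤ ∑ i, ⟪Hw y (e i), e i⟫)
    (hbd : ∀ y ∈ flatBox ν a A R, (⟪y, ν⟫ = a ∨ ⟪y, ν⟫ = A) → w y ≤ η)
    (hm : ∀ y ∈ flatBox ν a A R, w y ≤ m0)
    (hcond : 2 * m0 * n / R^2 + 2 * K * m0 / R + σ < η * Real.exp (-((K+1) * A))) :
    w ν ≤ 2 * η := by
  set k := K + 1 with hk
  let ψ : E → ℝ := fun y => η + η * (1 - Real.exp (-(k * ⟪y, ν⟫))) + (m0 / R^2) * (‖y‖^2 - ⟪y, ν⟫^2)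
  set D := flatBox ν a A R with hD
  have hDcl : IsClosed D := by
    have e1 : IsClosed {y : E | a ≤ ⟪y, ν⟫} := isClosed_le continuous_const (by fun_prop)
    have e2 : IsClosed {y : E | ⟪y, ν⟫ ≤ A} := isClosed_le (by fun_prop) continuous_const
    have e3 : IsClosed {y : E | ‖y - ⟪y, ν⟫ • ν‖ ≤ R} := isClosed_le (by fun_prop) continuous_const
    exact (e1.inter e2).inter e3
  have hDc : IsCompact D := by
    refine (isCompact_closedBall (0:E) (A + R)).of_isClosed_subset hDcl fun y hy => ?_
    simpa using flatBox_norm hν ha hy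
  have hνν : ⟪ν, ν⟫ = 1 := by rw [real_inner_self_eq_norm_sq, hν]; norm_num
  have hνD : ν ∈ D := by
    refine ⟨⟨?_, ?_⟩, ?_⟩
    · rwa [hνν]
    · rwa [hνν]
    · rw [hνν]; simp [hR.le]
  have hψc : Continuous ψ := by fun_prop
  have hwc : ContinuousOn w D := fun y hy => (h1 y hy).hasFDerivAt.continuousAt.continuousWithinAt
  obtain ⟨y, hyD, hmax⟩ := hDc.exists_isMaxOn ⟨ν, hνD⟩ (hwc.sub hψc.continuousOn)
  have hmax' : ∀ x ∈ D, w x - ψ x ≤ w y - ψ y := fun x hx => hmax hx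
  have hneg : w y - ψ y ≤ 0 := by
    by_contra! hpos
    have hwy := hm y hyD
    obtain ⟨⟨hya, hyA⟩, hyR⟩ := hyD
    have hyD : y ∈ D := ⟨⟨hya, hyA⟩, hyR⟩
    have htan : ‖y‖^2 - ⟪y, ν⟫^2 = ‖y - ⟪y, ν⟫ • ν‖^2 := (norm_tang_sq hν).symm
    have hmR : 0 ≤ m0 / R^2 := by positivity
    have hexp1 : Real.exp (-(k * ⟪y, ν⟫)) ≤ 1 := by
      rw [Real.exp_le_one_iff]
      have : 0 ≤ k * ⟪y, ν⟫ := mul_nonneg (by linarith) (ha.trans hya)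
      linarith
    have hψ1 : 0 ≤ η * (1 - Real.exp (-(k * ⟪y, ν⟫))) := mul_nonneg hη.le (by linarith)
    have hψ2 : 0 ≤ (m0 / R^2) * (‖y‖^2 - ⟪y, ν⟫^2) := by rw [htan]; positivity
    have hza : a < ⟪y, ν⟫ := by
      refine lt_of_le_of_ne hya fun h => ?_
      have := hbd y hyD (Or.inl h.symm)
      simp only [ψ] at hpos; linarith
    have hzA : ⟪y, ν⟫ < A := by
      refine lt_of_le_of_ne hyA fun h => ?_
      have := hbd y hyD (Or.inr h)
      simp only [ψ] at hpos; linarith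
    have hzR : ‖y - ⟪y, ν⟫ • ν‖ < R := by
      refine lt_of_le_of_ne hyR fun h => ?_
      have : (m0 / R^2) * (‖y‖^2 - ⟪y, ν⟫^2) = m0 := by rw [htan, h]; field_simp
      simp only [ψ] at hpos; linarith
    set z := ⟪y, ν⟫ with hz
    set X := Real.exp (-(k * z)) with hX
    have hX0 : 0 < X := Real.exp_pos _
    have hkey : ∀ d : E, ⟪Gw y, d⟫ - (η * k * X * ⟪d, ν⟫ + (m0 / R^2) * (2 * ⟪y, d⟫ - 2 * z * ⟪d, ν⟫)) = 0 ∧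
        ⟪Hw y d, d⟫ - (-(η * k^2 * X * ⟪d, ν⟫^2) + (m0 / R^2) * (2 * ‖d‖^2 - 2 * ⟪d, ν⟫^2)) ≤ 0 := by
      intro d
      have hball : ∀ᶠ s in 𝓝 (0:ℝ), y + s • d ∈ D := by
        have hopen : IsOpen {x : E | (a < ⟪x, ν⟫ ∧ ⟪x, ν⟫ < A) ∧ ‖x - ⟪x, ν⟫ • ν‖ < R} := by
          have e1 : IsOpen {y : E | a < ⟪y, ν⟫} := isOpen_lt continuous_const (by fun_prop)
          have e2 : IsOpen {y : E | ⟪y, ν⟫ < A} := isOpen_lt (by fun_prop) continuous_const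
          have e3 : IsOpen {y : E | ‖y - ⟪y, ν⟫ • ν‖ < R} := isOpen_lt (by fun_prop) continuous_const
          exact (e1.inter e2).inter e3
        have := (tendsto_line y d).eventually (hopen.mem_nhds ⟨⟨hza, hzA⟩, hzR⟩)
        filter_upwards [this] with s hs
        obtain ⟨⟨k1, k2⟩, k3⟩ := hs
        exact ⟨⟨k1.le, k2.le⟩, k3.le⟩
      let ψ1 : ℝ → ℝ := fun s => η * (k * ⟪d, ν⟫ * Real.exp (-(k * (z + s * ⟪d, ν⟫)))) +
        (m0 / R^2) * (2 * ⟪y, d⟫ + 2 * s * ‖d‖^2 - 2 * (z + s * ⟪d, ν⟫) * ⟪d, ν⟫)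
      have hψline : ∀ s : ℝ, ψ (y + s • d) = η + η * (1 - Real.exp (-(k * (z + s * ⟪d, ν⟫)))) +
          (m0 / R^2) * (‖y‖^2 + 2 * s * ⟪y, d⟫ + s^2 * ‖d‖^2 - (z + s * ⟪d, ν⟫)^2) := by
        intro s
        simp only [ψ]
        rw [norm_add_sq_real, inner_add_left, inner_smul_left, inner_smul_right, norm_smul, mul_pow,
          Real.norm_eq_abs, sq_abs]
        simp only [conj_trivial, ← hz]
        ring
      have hexpd : ∀ s : ℝ, HasDerivAt (fun s : ℝ => Real.exp (-(k * (z + s * ⟪d, ν⟫))))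
          (Real.exp (-(k * (z + s * ⟪d, ν⟫))) * -(k * ⟪d, ν⟫)) s := by
        intro s
        have hid := hasDerivAt_id s
        have := ((((hid.mul_const ⟪d, ν⟫).const_add z).const_mul k).neg).exp
        refine this.congr_deriv ?_
        simp
      have hψd : ∀ s : ℝ, HasDerivAt (fun s : ℝ => ψ (y + s • d)) (ψ1 s) s := by
        intro s
        simp_rw [hψline]
        have hid := hasDerivAt_id s
        have hlin := (hid.mul_const ⟪d, ν⟫).const_add z
        have hA := ((((hid.const_mul 2).mul_const ⟪y, d⟫).const_add (‖y‖^2)).add ((hid.pow 2).mul_const (‖d‖^2))).sub (hlin.pow 2)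
        have := ((((hexpd s).const_sub 1).const_mul η).const_add η).add (hA.const_mul (m0 / R^2))
        refine this.congr_deriv ?_
        simp only [ψ1, id]; push_cast; ring
      have hψ2 : HasDerivAt ψ1 (-(η * k^2 * X * ⟪d, ν⟫^2) + (m0 / R^2) * (2 * ‖d‖^2 - 2 * ⟪d, ν⟫^2)) 0 := by
        have hid := hasDerivAt_id (0:ℝ)
        have hlin := (hid.mul_const ⟪d, ν⟫).const_add z
        have := (((hexpd 0).const_mul (k * ⟪d, ν⟫)).const_mul η).add
          (((((hid.const_mul 2).mul_const (‖d‖^2)).const_add (2 * ⟪y, d⟫)).sub ((hlin.const_mul 2).mul_const ⟪d, ν⟫)).const_mul (m0 / R^2))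
        refine this.congr_deriv ?_
        simp [hX]; ring
      have hres := line_second_deriv (g := fun s => w (y + s • d) - ψ (y + s • d))
        (g1 := fun s => ⟪Gw (y + s • d), d⟫ - ψ1 s)
        (a := ⟪Hw y d, d⟫ - (-(η * k^2 * X * ⟪d, ν⟫^2) + (m0 / R^2) * (2 * ‖d‖^2 - 2 * ⟪d, ν⟫^2))) ?_ ?_ ?_
      · refine ⟨?_, hres.2⟩
        have := hres.1
        simp only [ψ1, zero_smul, add_zero, zero_mul, mul_zero] at this
        rw [← hX] at this
        rw [← this]; ring
      · filter_upwards [hball] with s hs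
        exact (grad_line (h1 _ hs)).sub (hψd s)
      · exact (hess_line (σ := 0) (d := d) (x := y) (by simpa using h2 y hyD) d).sub hψ2
      · filter_upwards [hball] with s hs
        simp only [zero_smul, add_zero]
        exact hmax' _ hs
    have hG : ‖Gw y‖ ≤ η * k * X + 2 * m0 / R := by
      have hGe : Gw y = (η * k * X) • ν + (2 * (m0 / R^2)) • (y - z • ν) := by
        refine ext_inner_right ℝ fun d => ?_
        have := (hkey d).1
        rw [inner_add_left, inner_smul_left, inner_smul_left, inner_sub_left, inner_smul_left]
        simp only [conj_trivial]
        rw [real_inner_comm d ν] at *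
        linarith
      rw [hGe]
      refine (norm_add_le _ _).trans ?_
      rw [norm_smul, norm_smul, hν, Real.norm_eq_abs, Real.norm_eq_abs,
        abs_of_nonneg (by positivity : 0 ≤ η * k * X), abs_of_nonneg (by positivity : 0 ≤ 2 * (m0 / R^2)), mul_one]
      have : 2 * (m0 / R^2) * ‖y - z • ν‖ ≤ 2 * (m0 / R^2) * R := mul_le_mul_of_nonneg_left hyR (by positivity)
      have h3 : 2 * (m0 / R^2) * R = 2 * m0 / R := by field_simp
      linarith
    have hsum : ∑ i, (⟪Hw y (e i), e i⟫ - (-(η * k^2 * X * ⟪e i, ν⟫^2) + (m0 / R^2) * (2 * ‖e i‖^2 - 2 * ⟪e i, ν⟫^2))) ≤ 0 :=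
      Finset.sum_nonpos fun i _ => (hkey (e i)).2
    have hpars : ∑ i, ⟪e i, ν⟫^2 = 1 := by
      have := e.sum_sq_norm_inner_right ν
      simpa [hν] using this
    simp only [e.orthonormal.1, Finset.sum_sub_distrib, Finset.sum_add_distrib, ← Finset.mul_sum, hpars, Finset.sum_neg_distrib] at hsum
    simp only [Finset.sum_const, Finset.card_univ, Fintype.card_fin, nsmul_eq_mul] at hsum
    have hin := hineq y hyD
    have hXA : Real.exp (-(k * A)) ≤ X := by
      rw [hX]; apply Real.exp_le_exp.2
      have : k * z ≤ k * A := mul_le_mul_of_nonneg_left hyA (by linarith)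
      linarith
    have h4 : η * Real.exp (-(k*A)) ≤ η * X := mul_le_mul_of_nonneg_left hXA hη.le
    have h5 : K * ‖Gw y‖ ≤ K * (η * k * X + 2 * m0 / R) := mul_le_mul_of_nonneg_left hG hK
    have h6 : 2 * m0 * n / R^2 = (m0 / R^2) * (n * (2 * 1)) := by ring
    have h7 : 2 * K * m0 / R = K * (2 * m0 / R) := by ring
    have h8 : 0 ≤ η * X := by positivity
    have h9 : η * k^2 * X = η * X * (K + 1) + K * (η * k * X) := by rw [hk]; ring
    nlinarith
  have hfin := (hmax' ν hνD).trans hneg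
  have hψν : ψ ν ≤ 2 * η := by
    simp only [ψ, hνν, hν]
    have := Real.exp_pos (-(k * 1))
    nlinarith
  linarith

end General

section Geometry
variable {E : Type*} [NormedAddCommGroup E] [InnerProductSpace ℝ E] [FiniteDimensional ℝ E]

/-- geometric data of the domain -/
structure Geo (Ω : Set E) (δ : E → ℝ) (δ₀ : ℝ) (P ν : E → E) : Prop where
  ho : IsOpen Ω
  hb : Bornology.IsBounded Ω
  hne : (frontier Ω).Nonempty
  hδ : ∀ x, δ x = infDist x (frontier Ω)
  hδ₀ : 0 < δ₀
  hP : ∀ x ∈ Ω, δ x < δ₀ → P x ∈ frontier Ω ∧ dist x (P x) = δ x ∧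
      ∀ b ∈ frontier Ω, dist x b = δ x → b = P x
  hν1 : ∀ b ∈ frontier Ω, ‖ν b‖ = 1 ∧
      ∀ s ∈ Ioo (0 : ℝ) δ₀, b + s • ν b ∈ Ω ∧ δ (b + s • ν b) = s
  hν2 : ∀ x ∈ Ω, δ x < δ₀ → ν x = ν (P x) ∧ HasGradientAt δ (ν x) x

variable {Ω : Set E} {δ : E → ℝ} {δ₀ : ℝ} {P ν : E → E}

lemma Geo.lip (g : Geo Ω δ δ₀ P ν) (x y : E) : δ x ≤ δ y + dist x y := by
  rw [g.hδ, g.hδ]; exact infDist_le_infDist_add_dist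

lemma Geo.cont (g : Geo Ω δ δ₀ P ν) : Continuous δ := by
  have : δ = fun x => infDist x (frontier Ω) := funext g.hδ
  rw [this]; exact continuous_infDist_pt _

lemma Geo.le_dist (g : Geo Ω δ δ₀ P ν) {x b : E} (hb : b ∈ frontier Ω) : δ x ≤ dist x b := by
  rw [g.hδ]; exact infDist_le_dist_of_mem hb

lemma Geo.zero (g : Geo Ω δ δ₀ P ν) {b : E} (hb : b ∈ frontier Ω) : δ b = 0 := by
  rw [g.hδ]; exact infDist_zero_of_mem hb

lemma Geo.nonneg (g : Geo Ω δ δ₀ P ν) (x : E) : 0 ≤ δ x := by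
  rw [g.hδ]; exact infDist_nonneg

lemma Geo.pos (g : Geo Ω δ δ₀ P ν) {x : E} (hx : x ∈ Ω) : 0 < δ x := by
  rw [g.hδ]
  refine (isClosed_frontier.notMem_iff_infDist_pos g.hne).1 fun h => ?_
  rw [g.ho.frontier_eq] at h
  exact h.2 hx

lemma Geo.mem_of_closure (g : Geo Ω δ δ₀ P ν) {x : E} (hx : x ∈ closure Ω) (h : 0 < δ x) : x ∈ Ω := by
  by_contra hn
  have : x ∈ frontier Ω := by rw [g.ho.frontier_eq]; exact ⟨hx, hn⟩
  rw [g.zero this] at h; exact lt_irrefl _ h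

lemma Geo.ball_sub (g : Geo Ω δ δ₀ P ν) {x : E} (hx : x ∈ Ω) : ball x (δ x) ⊆ Ω := by
  by_contra hn
  have h1 : (ball x (δ x) ∩ Ω).Nonempty := ⟨x, mem_ball_self (g.pos hx), hx⟩
  have h2 : (ball x (δ x) ∩ Ωᶜ).Nonempty := by
    obtain ⟨y, hy, hy2⟩ := not_subset.1 hn
    exact ⟨y, hy, hy2⟩
  have h3 : (ball x (δ x) ∩ frontier Ω).Nonempty := by
    by_contra hne
    have hpre : IsPreconnected (ball x (δ x)) := (convex_ball x (δ x)).isPreconnected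
    have hsub : ball x (δ x) ⊆ Ω ∪ (closure Ω)ᶜ := by
      intro y hy
      by_cases hyΩ : y ∈ Ω
      · exact Or.inl hyΩ
      · refine Or.inr fun hc => hne ⟨y, hy, ?_⟩
        rw [g.ho.frontier_eq]; exact ⟨hc, hyΩ⟩
    have h4 : (ball x (δ x) ∩ (closure Ω)ᶜ).Nonempty := by
      obtain ⟨y, hy, hy2⟩ := h2
      rcases hsub hy with h | h
      · exact absurd h hy2
      · exact ⟨y, hy, h⟩
    obtain ⟨z, _, hz1, hz2⟩ := hpre _ _ g.ho isClosed_closure.isOpen_compl hsub h1 h4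
    exact hz2 (subset_closure hz1)
  obtain ⟨y, hy, hyf⟩ := h3
  have := g.le_dist (x := x) hyf
  rw [mem_ball, dist_comm] at hy
  linarith

lemma Geo.normP (g : Geo Ω δ δ₀ P ν) {x : E} (hx : x ∈ Ω) (h : δ x < δ₀) : ‖ν x‖ = 1 := by
  rw [(g.hν2 x hx h).1]; exact (g.hν1 _ (g.hP x hx h).1).1

lemma dir_deriv {f : E → ℝ} {a x m : E} {c : ℝ} (hc : 0 < c) (h : HasGradientAt f a x)
    (hl : ∀ s ∈ Icc 0 c, f (x + s • m) = f x - s) : ⟪a, m⟫ = -1 := by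
  have h1 : HasDerivAt (fun s : ℝ => f (x + s • m)) ⟪a, m⟫ 0 := grad_line (by simpa using h)
  have h2 : HasDerivWithinAt (fun s : ℝ => f x - s) (-1) (Icc 0 c) 0 := by
    exact ((hasDerivAt_id (0:ℝ)).const_sub (f x)).hasDerivWithinAt
  have h3 : HasDerivWithinAt (fun s : ℝ => f (x + s • m)) (-1) (Icc 0 c) 0 :=
    h2.congr (fun s hs => hl s hs) (hl 0 ⟨le_rfl, hc.le⟩)
  exact ((uniqueDiffOn_Icc hc) 0 ⟨le_rfl, hc.le⟩).eq_deriv _ h1.hasDerivWithinAt h3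

lemma Geo.repr (g : Geo Ω δ δ₀ P ν) {x : E} (hx : x ∈ Ω) (h : δ x < δ₀) : x = P x + δ x • ν (P x) := by
  obtain ⟨hb, hd, _⟩ := g.hP x hx h
  obtain ⟨hνx, hgr⟩ := g.hν2 x hx h
  have hpos := g.pos hx
  set d := δ x with hdd
  set b := P x with hbb
  let m : E := d⁻¹ • (b - x)
  have hn : ‖b - x‖ = d := by rw [← hd, dist_comm, dist_eq_norm]
  have hm : ‖m‖ = 1 := by
    simp only [m]; rw [norm_smul, hn, norm_inv, Real.norm_eq_abs, abs_of_pos hpos]; field_simp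
  have hdm : d • m = b - x := by
    simp only [m]; rw [smul_smul, mul_inv_cancel₀ hpos.ne', one_smul]
  have hl : ∀ s ∈ Icc 0 d, δ (x + s • m) = δ x - s := by
    intro s hs
    apply le_antisymm
    · refine (g.le_dist hb).trans ?_
      have : x + s • m - b = -((d - s) • m) := by
        have : x - b = -(d • m) := by rw [hdm]; abel
        rw [sub_smul, add_sub_right_comm, this]; abel
      rw [dist_eq_norm, this, norm_neg, norm_smul, hm, Real.norm_eq_abs, abs_of_nonneg (by linarith [hs.2])]
      simp [hdd]
    · have := g.lip x (x + s • m)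
      rw [dist_eq_norm, sub_add_cancel_left, norm_neg, norm_smul, hm, Real.norm_eq_abs, abs_of_nonneg hs.1] at this
      linarith
  have hi := dir_deriv hpos hgr hl
  have hνn : ‖ν x‖ = 1 := g.normP hx h
  have h1 : ⟪ν x, -m⟫ = 1 := by rw [inner_neg_right, hi]; norm_num
  have h2 : ν x = -m := (inner_eq_one_iff_of_norm_eq_one hνn (by rw [norm_neg, hm])).1 h1
  rw [← hνx, h2, smul_neg, hdm]; abel

lemma Geo.nu_unique (g : Geo Ω δ δ₀ P ν) {b μ : E} (hb : b ∈ frontier Ω)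
    (h : b + (δ₀/2) • μ ∈ closure Ω) (h2 : δ (b + (δ₀/2) • μ) = δ₀/2) (hμ : ‖μ‖ = 1) : μ = ν b := by
  have hd := g.hδ₀
  have hm : b + (δ₀/2) • μ ∈ Ω := g.mem_of_closure h (by rw [h2]; linarith)
  have hlt : δ (b + (δ₀/2) • μ) < δ₀ := by rw [h2]; linarith
  obtain ⟨_, _, hu⟩ := g.hP _ hm hlt
  have hPb : b = P (b + (δ₀/2) • μ) := by
    apply hu b hb
    rw [dist_eq_norm, add_sub_cancel_left, norm_smul, hμ, h2, Real.norm_eq_abs, abs_of_pos (by linarith), mul_one]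
  have := g.repr hm hlt
  rw [← hPb, h2] at this
  have h3 := add_left_cancel this
  exact smul_right_injective E (by linarith : δ₀/2 ≠ 0) h3

lemma Geo.nu_uc (g : Geo Ω δ δ₀ P ν) {κ : ℝ} (hκ : 0 < κ) :
    ∃ ρ > 0, ∀ b ∈ frontier Ω, ∀ b' ∈ frontier Ω, dist b b' < ρ → ‖ν b - ν b'‖ ≤ κ := by
  by_contra! hcon
  have hd := g.hδ₀
  have hk : ∀ k : ℕ, (0:ℝ) < 1 / (k + 1) := fun k => Nat.one_div_pos_of_nat
  choose b hb b' hb' hdist hfar using fun k : ℕ => hcon (1 / (k + 1)) (hk k)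
  have hfc : IsCompact (frontier Ω) := isCompact_of_isClosed_isBounded isClosed_frontier
    (g.hb.closure.subset frontier_subset_closure)
  have hK : IsCompact ((frontier Ω ×ˢ sphere (0:E) 1) ×ˢ (frontier Ω ×ˢ sphere (0:E) 1)) :=
    (hfc.prod (isCompact_sphere _ _)).prod (hfc.prod (isCompact_sphere _ _))
  obtain ⟨⟨⟨c, μ⟩, ⟨c', μ'⟩⟩, ⟨⟨hc, hμ⟩, ⟨hc', hμ'⟩⟩, φ, hφ, hlim⟩ := hK.tendsto_subseq
    (x := fun k => ((b k, ν (b k)), (b' k, ν (b' k)))) (fun k => ⟨⟨hb k, by simpa using (g.hν1 _ (hb k)).1⟩,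
      ⟨hb' k, by simpa using (g.hν1 _ (hb' k)).1⟩⟩)
  have l1 : Tendsto (fun k => b (φ k)) atTop (𝓝 c) :=
    (continuous_fst.comp continuous_fst).continuousAt.tendsto.comp hlim
  have l2 : Tendsto (fun k => ν (b (φ k))) atTop (𝓝 μ) :=
    (continuous_snd.comp continuous_fst).continuousAt.tendsto.comp hlim
  have l3 : Tendsto (fun k => b' (φ k)) atTop (𝓝 c') :=
    (continuous_fst.comp continuous_snd).continuousAt.tendsto.comp hlim
  have l4 : Tendsto (fun k => ν (b' (φ k))) atTop (𝓝 μ') :=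
    (continuous_snd.comp continuous_snd).continuousAt.tendsto.comp hlim
  have key : ∀ (β : ℕ → E) (c μ : E), (∀ k, β k ∈ frontier Ω) → c ∈ frontier Ω → ‖μ‖ = 1 →
      Tendsto β atTop (𝓝 c) → Tendsto (fun k => ν (β k)) atTop (𝓝 μ) → μ = ν c := by
    intro β c μ h1 h2 h3 h4 h5
    have h6 : Tendsto (fun k => β k + (δ₀/2) • ν (β k)) atTop (𝓝 (c + (δ₀/2) • μ)) := h4.add (h5.const_smul _)
    have hIoo : δ₀/2 ∈ Ioo (0:ℝ) δ₀ := ⟨by linarith, by linarith⟩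
    refine g.nu_unique h2 ?_ ?_ h3
    · exact isClosed_closure.mem_of_tendsto h6 (Eventually.of_forall fun k =>
        subset_closure ((g.hν1 _ (h1 k)).2 _ hIoo).1)
    · have h7 := (g.cont.tendsto _).comp h6
      have h8 : (δ ∘ fun k => β k + (δ₀/2) • ν (β k)) = fun _ => δ₀/2 :=
        funext fun k => ((g.hν1 _ (h1 k)).2 _ hIoo).2
      rw [h8] at h7
      exact tendsto_nhds_unique h7 tendsto_const_nhds
  have e1 := key _ _ _ (fun k => hb (φ k)) hc (by simpa using hμ) l1 l2
  have e2 := key _ _ _ (fun k => hb' (φ k)) hc' (by simpa using hμ') l3 l4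
  have ecc : dist c c' = 0 := by
    have h1 := l1.dist l3
    have h2 : Tendsto (fun k => (1:ℝ) / ((φ k : ℝ) + 1)) atTop (𝓝 0) :=
      tendsto_one_div_add_atTop_nhds_zero_nat.comp hφ.tendsto_atTop
    exact le_antisymm (le_of_tendsto_of_tendsto' h1 h2 fun k => (hdist (φ k)).le) dist_nonneg
  have ecc' : c = c' := dist_eq_zero.1 ecc
  have h1 := (l2.sub l4).norm
  have h2 : κ ≤ ‖μ - μ'‖ := ge_of_tendsto' h1 fun k => (hfar (φ k)).le
  rw [e1, e2, ecc', sub_self, norm_zero] at h2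
  linarith

lemma Geo.sphere_in (g : Geo Ω δ δ₀ P ν) {b z : E} (hb : b ∈ frontier Ω)
    (hq : 0 < ⟪z, ν b⟫ - ‖z‖^2 / δ₀) : b + z ∈ Ω ∧ ⟪z, ν b⟫ - ‖z‖^2 / δ₀ ≤ δ (b + z) := by
  have hd := g.hδ₀
  obtain ⟨hn, hs⟩ := g.hν1 b hb
  obtain ⟨hcΩ, hcδ⟩ := hs (δ₀/2) ⟨by linarith, by linarith⟩
  set q := ⟪z, ν b⟫ - ‖z‖^2 / δ₀ with hqd
  have hdist : dist (b + z) (b + (δ₀/2) • ν b) ^ 2 = (δ₀/2)^2 - δ₀ * q := by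
    rw [dist_eq_norm, add_sub_add_left_eq_sub, norm_sub_sq_real, inner_smul_right, norm_smul, hn,
      Real.norm_eq_abs, abs_of_pos (by linarith : 0 < δ₀/2), hqd]
    field_simp; ring
  have hcs : ⟪z, ν b⟫ ≤ ‖z‖ := by
    have := real_inner_le_norm z (ν b); rwa [hn, mul_one] at this
  have hq2 : q ≤ δ₀/2 := by
    have h1 : ‖z‖ ≤ ‖z‖^2/δ₀ + δ₀/4 := by
      have : ‖z‖^2/δ₀ + δ₀/4 - ‖z‖ = (‖z‖ - δ₀/2)^2/δ₀ := by field_simp; ring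
      have h2 : 0 ≤ (‖z‖ - δ₀/2)^2/δ₀ := by positivity
      linarith
    linarith
  have hle : dist (b + z) (b + (δ₀/2) • ν b) ≤ δ₀/2 - q := by
    refine abs_le_of_sq_le_sq' ?_ (by linarith) |>.2
    rw [hdist]; nlinarith
  constructor
  · apply g.ball_sub hcΩ
    rw [mem_ball, hcδ]; linarith
  · have := g.lip (b + (δ₀/2) • ν b) (b + z)
    rw [hcδ, dist_comm] at this; linarith

lemma Geo.box (g : Geo Ω δ δ₀ P ν) {a A R : ℝ} (ha : 0 < a) (ha1 : a ≤ 1) (hA : 1 ≤ A) (hR : 0 < R) :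
    ∃ l0 > 0, ∀ b ∈ frontier Ω, ∀ l : ℝ, 0 < l → l < l0 → ∀ y ∈ flatBox (ν b) a A R,
      b + l • y ∈ Ω ∧ |δ (b + l • y) - l * ⟪y, ν b⟫| ≤ l * ⟪y, ν b⟫ / 2 := by
  have hd := g.hδ₀
  set S := A + R + 1 with hS
  have hS0 : 0 < S := by linarith
  obtain ⟨ρ, hρ, hνc⟩ := g.nu_uc (κ := a / (2 * S)) (by positivity)
  refine ⟨min (min (a * δ₀ / (2 * S^2)) (δ₀ / S)) (ρ / (2 * S)), by positivity, ?_⟩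
  intro b hb l hl hl0
  have l1 : l * (2 * S^2) < a * δ₀ := by
    rw [← lt_div_iff₀ (by positivity)]; exact hl0.trans_le ((min_le_left _ _).trans (min_le_left _ _))
  have l2 : l * S < δ₀ := by
    rw [← lt_div_iff₀ (by positivity)]; exact hl0.trans_le ((min_le_left _ _).trans (min_le_right _ _))
  have l3 : l * (2 * S) < ρ := by
    rw [← lt_div_iff₀ (by positivity)]; exact hl0.trans_le (min_le_right _ _)
  obtain ⟨hn, hs⟩ := g.hν1 b hb
  have hyS : ∀ y ∈ flatBox (ν b) a A R, ‖y‖ ≤ S := fun y hy => by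
    have := flatBox_norm hn ha.le hy; linarith
  have hin : ∀ y ∈ flatBox (ν b) a A R, b + l • y ∈ Ω ∧ δ (b + l • y) ≤ l * S := by
    intro y hy
    have hy1 := hyS y hy
    constructor
    · refine (g.sphere_in hb ?_).1
      rw [inner_smul_left, norm_smul, Real.norm_eq_abs, abs_of_pos hl]
      simp only [conj_trivial]
      have h1 : (l * ‖y‖)^2 / δ₀ < l * a := by
        rw [div_lt_iff₀ hd]
        have : ‖y‖^2 ≤ S^2 := by gcongr
        nlinarith [mul_pos hl hl, sq_nonneg S]
      have := mul_le_mul_of_nonneg_left hy.1.1 hl.le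
      linarith
    · refine (g.le_dist hb).trans ?_
      rw [dist_eq_norm, add_sub_cancel_left, norm_smul, Real.norm_eq_abs, abs_of_pos hl]
      gcongr
  have hνν : ⟪ν b, ν b⟫ = 1 := by rw [real_inner_self_eq_norm_sq, hn]; norm_num
  have hνD : ν b ∈ flatBox (ν b) a A R := by
    refine ⟨⟨?_, ?_⟩, ?_⟩
    · rwa [hνν]
    · rwa [hνν]
    · rw [hνν]; simp [hR.le]
  have hlδ : δ (b + l • ν b) = l := (hs l ⟨hl, by nlinarith⟩).2
  have hcl : ∀ y ∈ flatBox (ν b) a A R, ‖ν (b + l • y) - ν b‖ ≤ a / (2 * S) := by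
    intro y hy
    obtain ⟨h1, h2⟩ := hin y hy
    have h3 : δ (b + l • y) < δ₀ := by linarith
    obtain ⟨hPf, hPd, _⟩ := g.hP _ h1 h3
    rw [(g.hν2 _ h1 h3).1]
    apply hνc _ hPf _ hb
    have h4 := dist_triangle (P (b + l • y)) (b + l • y) b
    have h5 : dist (b + l • y) b ≤ l * S := by
      rw [dist_eq_norm, add_sub_cancel_left, norm_smul, Real.norm_eq_abs, abs_of_pos hl]
      have := hyS y hy
      gcongr
    rw [dist_comm _ (b + l • y), hPd] at h4
    linarith
  intro y hy
  refine ⟨(hin y hy).1, ?_⟩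
  -- mean value along the segment from `ν b` to `y`
  have hseg : ∀ s ∈ Icc (0:ℝ) 1, ν b + s • (y - ν b) ∈ flatBox (ν b) a A R := by
    intro s hs
    have := flatBox_convex hνD hy (by linarith [hs.2] : 0 ≤ 1 - s) hs.1 (by ring)
    convert this using 1; module
  have hmv := mv_line (g := fun s : ℝ => δ ((b + l • ν b) + s • (l • (y - ν b))) - s * (l * ⟪y - ν b, ν b⟫))
    (g' := fun s : ℝ => ⟪ν ((b + l • ν b) + s • (l • (y - ν b))) - ν b, l • (y - ν b)⟫)
    (h := 1) (m := a / (2 * S) * (l * S)) zero_le_one ?_ ?_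
  · simp only [one_smul, zero_smul, add_zero, one_mul, zero_mul, sub_zero, hlδ, mul_one] at hmv
    have e1 : b + l • ν b + l • (y - ν b) = b + l • y := by module
    rw [e1, inner_sub_left, hνν, Real.norm_eq_abs] at hmv
    have e2 : a / (2 * S) * (l * S) = l * a / 2 := by field_simp
    have e3 : δ (b + l • y) - l * (⟪y, ν b⟫ - 1) - l = δ (b + l • y) - l * ⟪y, ν b⟫ := by ring
    rw [e2, e3] at hmv
    have := mul_le_mul_of_nonneg_left hy.1.1 hl.le
    linarith
  · intro s hs
    have e1 : (b + l • ν b) + s • (l • (y - ν b)) = b + l • (ν b + s • (y - ν b)) := by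
      module
    obtain ⟨h1, h2⟩ := hin _ (hseg s hs)
    rw [← e1] at h1 h2
    have h3 := (g.hν2 _ h1 (by linarith)).2
    have h4 := (grad_line h3).sub ((hasDerivAt_id s).mul_const (l * ⟪y - ν b, ν b⟫))
    refine h4.congr_deriv ?_
    rw [real_inner_comm (ν b) (y - ν b), inner_sub_left (ν _) (ν b) (l • (y - ν b)), inner_smul_right, inner_smul_right]
    ring
  · intro s hs
    have e1 : (b + l • ν b) + s • (l • (y - ν b)) = b + l • (ν b + s • (y - ν b)) := by
      module
    have h1 := hcl _ (hseg s hs)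
    rw [← e1] at h1
    refine (norm_inner_le_norm _ _).trans ?_
    rw [norm_smul, Real.norm_eq_abs, abs_of_pos hl]
    have h2 : ‖y - ν b‖ ≤ S := by
      have := norm_sub_le y (ν b)
      have h5 := flatBox_norm hn ha.le hy
      rw [hn] at this; linarith
    gcongr

end Geometry

section Solution
variable {E : Type*} [NormedAddCommGroup E] [InnerProductSpace ℝ E] [FiniteDimensional ℝ E]

/-- the solution data -/
structure Sol {n : ℕ} (e : OrthonormalBasis (Fin n) ℝ E) (Ω : Set E) (δ : E → ℝ) (p β T M C₀ : ℝ) (u : E → ℝ → ℝ) (G : E → ℝ → E)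
    (H : E → ℝ → E →L[ℝ] E) (u' : E → ℝ → ℝ) : Prop where
  hp : 2 < p
  hβ : β = 1 / (p - 1)
  hT : 0 < T
  hu_cont : ContinuousOn (fun q : E × ℝ => u q.1 q.2) (closure Ω ×ˢ Icc 0 T)
  hu_bd : ∀ b ∈ frontier Ω, ∀ t ∈ Icc (0 : ℝ) T, u b t = 0
  hG_cont : ContinuousOn (fun q : E × ℝ => G q.1 q.2) (closure Ω ×ˢ Ico 0 T)
  hG2 : ∀ t ∈ Ioc (0 : ℝ) T, ∀ x ∈ Ω, HasGradientAt (fun y => u y t) (G x t) x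
  hH : ∀ t ∈ Ioc (0 : ℝ) T, ∀ x ∈ Ω, HasFDerivAt (fun y => G y t) (H x t) x
  hu' : ∀ t ∈ Ioc (0 : ℝ) T, ∀ x ∈ Ω, HasDerivAt (fun s => u x s) (u' x t) t
  hreg : ContinuousOn (fun q : E × ℝ => (u q.1 q.2, G q.1 q.2, H q.1 q.2, u' q.1 q.2)) (Ω ×ˢ Ioc 0 T)
  hPDE : ∀ t ∈ Ioc (0 : ℝ) T, ∀ x ∈ Ω, u' x t - ∑ i : Fin n, ⟪H x t (e i), e i⟫ = ‖G x t‖ ^ p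
  hM : ∀ x ∈ Ω, ∀ t ∈ Icc (T / 2) T, |u' x t| ≤ M
  hC₀ : ∀ x ∈ Ω, ∀ t ∈ Ico (0 : ℝ) T, ‖G x t‖ ≤ C₀ * ((δ x) ^ (-β) + 1)

variable {n : ℕ} {e : OrthonormalBasis (Fin n) ℝ E} {Ω : Set E} {δ : E → ℝ} {δ₀ : ℝ} {P ν : E → E} {p β T M C₀ : ℝ} {u : E → ℝ → ℝ} {G : E → ℝ → E}
    {H : E → ℝ → E →L[ℝ] E} {u' : E → ℝ → ℝ}

lemma Sol.b0 (S : Sol e Ω δ p β T M C₀ u G H u') : 0 < β := by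
  have := S.hp; rw [S.hβ]; apply div_pos <;> linarith

lemma Sol.b1 (S : Sol e Ω δ p β T M C₀ u G H u') : β < 1 := by
  have := S.hp; rw [S.hβ, div_lt_one] <;> linarith

lemma Sol.bp (S : Sol e Ω δ p β T M C₀ u G H u') : β * (p - 1) = 1 := by
  have := S.hp; rw [S.hβ]; have : p - 1 ≠ 0 := by linarith
  field_simp

lemma Sol.bp2 (S : Sol e Ω δ p β T M C₀ u G H u') : β * p = β + 1 := by
  have := S.bp; linarith

lemma rpow_half_le {β d d' : ℝ} (hβ : 0 < β) (hβ1 : β < 1) (hd : 0 < d) (h : d / 2 ≤ d') : d' ^ (-β) ≤ 2 * d ^ (-β) := by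
  calc d' ^ (-β) ≤ (d/2) ^ (-β) := Real.rpow_le_rpow_of_nonpos (by positivity) h (by linarith)
    _ = d ^ (-β) * (2:ℝ) ^ β := by
      rw [Real.div_rpow hd.le (by norm_num), Real.rpow_neg (by norm_num : (0:ℝ) ≤ 2), div_inv_eq_mul]
    _ ≤ d ^ (-β) * 2 := by
      gcongr
      calc (2:ℝ) ^ β ≤ 2 ^ (1:ℝ) := Real.rpow_le_rpow_of_exponent_le (by norm_num) hβ1.le
        _ = 2 := Real.rpow_one 2
    _ = _ := by ring

lemma Sol.contG (S : Sol e Ω δ p β T M C₀ u G H u') : ContinuousOn (fun q : E × ℝ => G q.1 q.2) (Ω ×ˢ Ioc 0 T) :=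
  (continuous_fst.comp continuous_snd).comp_continuousOn S.hreg

lemma Sol.contH (S : Sol e Ω δ p β T M C₀ u G H u') : ContinuousOn (fun q : E × ℝ => H q.1 q.2) (Ω ×ˢ Ioc 0 T) :=
  (continuous_fst.comp (continuous_snd.comp continuous_snd)).comp_continuousOn S.hreg

lemma Sol.gradB (S : Sol e Ω δ p β T M C₀ u G H u') (g : Geo Ω δ δ₀ P ν) {x : E} (hx : x ∈ Ω) (hd : δ x ≤ 1) {t : ℝ}
    (ht : t ∈ Ioc 0 T) : ‖G x t‖ ≤ (2 * |C₀| + 1) * δ x ^ (-β) := by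
  have hpos := g.pos hx
  have h1 : 1 ≤ δ x ^ (-β) := Real.one_le_rpow_of_pos_of_le_one_of_nonpos hpos hd (by linarith [S.b0])
  have hlt : ∀ t ∈ Ioo 0 T, ‖G x t‖ ≤ (2 * |C₀| + 1) * δ x ^ (-β) := by
    intro t ht
    have h2 := S.hC₀ x hx t ⟨ht.1.le, ht.2⟩
    have h3 : C₀ * (δ x ^ (-β) + 1) ≤ |C₀| * (δ x ^ (-β) + 1) := by
      gcongr; exact le_abs_self _
    nlinarith [abs_nonneg C₀]
  rcases eq_or_lt_of_le ht.2 with h | h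
  · rw [h]
    have hc : ContinuousWithinAt (fun s => G x s) (Ioc 0 T) T := by
      have := S.contG.comp (f := fun s : ℝ => (x, s)) (s := Ioc 0 T) (by fun_prop) (fun s hs => ⟨hx, hs⟩)
      exact this T ⟨S.hT, le_rfl⟩
    have hc2 : Tendsto (fun s => ‖G x s‖) (𝓝[Ioo 0 T] T) (𝓝 ‖G x T‖) :=
      (hc.mono Ioo_subset_Ioc_self).norm
    haveI : (𝓝[Ioo 0 T] T).NeBot := right_nhdsWithin_Ioo_neBot S.hT
    exact le_of_tendsto hc2 (by filter_upwards [self_mem_nhdsWithin] with s hs using hlt s hs)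
  · exact hlt t ⟨ht.1, h⟩

lemma Sol.uB (S : Sol e Ω δ p β T M C₀ u G H u') (g : Geo Ω δ δ₀ P ν) {x : E} (hx : x ∈ Ω) (hd : δ x ≤ 1) (hd' : δ x < δ₀) {t : ℝ}
    (ht : t ∈ Ioc 0 T) : |u x t| ≤ (2 * |C₀| + 1) / (1 - β) * δ x ^ (1 - β) := by
  have hpos := g.pos hx
  have hb1 := S.b1
  have hb0 := S.b0
  obtain ⟨hPf, _, _⟩ := g.hP x hx hd'
  have hrep := g.repr hx hd'
  obtain ⟨hn, hs⟩ := g.hν1 _ hPf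
  set b := P x
  set d := δ x
  set L0 := 2 * |C₀| + 1
  have hL0 : 0 < L0 := by positivity
  have hcl : ∀ s ∈ Icc 0 d, b + s • ν b ∈ closure Ω := by
    intro s hs'
    rcases eq_or_lt_of_le hs'.1 with h | h
    · rw [← h, zero_smul, add_zero]; exact frontier_subset_closure hPf
    · exact subset_closure (hs s ⟨h, hs'.2.trans_lt hd'⟩).1
  have hfc : ContinuousOn (fun s : ℝ => u (b + s • ν b) t) (Icc 0 d) :=
    S.hu_cont.comp (f := fun s : ℝ => (b + s • ν b, t)) (by fun_prop) fun s hs' => ⟨hcl s hs', ht.1.le, ht.2⟩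
  have hfd : ∀ s ∈ Ioo 0 d, HasDerivAt (fun s : ℝ => u (b + s • ν b) t) ⟪G (b + s • ν b) t, ν b⟫ s := fun s hs' =>
    grad_line (v := fun y => u y t) (S.hG2 t ht _ (hs s ⟨hs'.1, hs'.2.trans hd'⟩).1)
  have hfb : ∀ s ∈ Ioo 0 d, |⟪G (b + s • ν b) t, ν b⟫| ≤ L0 * s ^ (-β) := by
    intro s hs'
    obtain ⟨h1, h2⟩ := hs s ⟨hs'.1, hs'.2.trans hd'⟩
    have h3 := S.gradB g h1 (by rw [h2]; linarith [hs'.2]) ht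
    rw [h2] at h3
    refine (abs_real_inner_le_norm _ _).trans ?_
    rwa [hn, mul_one]
  have hBc : ContinuousOn (fun s : ℝ => L0 / (1 - β) * s ^ (1 - β)) (Icc 0 d) :=
    (continuous_const.mul (Real.continuous_rpow_const (by linarith))).continuousOn
  have hBd : ∀ s ∈ Ioo 0 d, HasDerivAt (fun s : ℝ => L0 / (1 - β) * s ^ (1 - β)) (L0 * s ^ (-β)) s := by
    intro s hs'
    have := (Real.hasDerivAt_rpow_const (x := s) (p := 1 - β) (Or.inl hs'.1.ne')).const_mul (L0 / (1 - β))
    refine this.congr_deriv ?_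
    have h1 : (1 - β - 1) = -β := by ring
    have h2 : 1 - β ≠ 0 := by linarith
    rw [h1]; field_simp
  have hu0 : u b t = 0 := S.hu_bd b hPf t ⟨ht.1.le, ht.2⟩
  have key : ∀ c : ℝ, |c| = 1 → 0 ≤ L0 / (1 - β) * d ^ (1 - β) + c * u x t := by
    intro c hc
    have hmono : MonotoneOn (fun s : ℝ => L0 / (1 - β) * s ^ (1 - β) + c * u (b + s • ν b) t) (Icc 0 d) := by
      refine monotoneOn_of_deriv_nonneg (convex_Icc 0 d) (hBc.add (continuousOn_const.mul hfc)) ?_ ?_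
      · rw [interior_Icc]
        intro s hs'
        exact ((hBd s hs').add ((hfd s hs').const_mul c)).differentiableAt.differentiableWithinAt
      · rw [interior_Icc]
        intro s hs'
        rw [show deriv (fun s : ℝ => L0 / (1 - β) * s ^ (1 - β) + c * u (b + s • ν b) t) s = _ from
          ((hBd s hs').add ((hfd s hs').const_mul c)).deriv]
        have h1 := hfb s hs'
        have h2 : |c * ⟪G (b + s • ν b) t, ν b⟫| ≤ L0 * s ^ (-β) := by rw [abs_mul, hc, one_mul]; exact h1
        linarith [(abs_le.1 h2).1]
    have := hmono ⟨le_rfl, hpos.le⟩ ⟨hpos.le, le_rfl⟩ hpos.le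
    simp only [zero_smul, add_zero, hu0, mul_zero, ← hrep] at this
    rw [Real.zero_rpow (by linarith), mul_zero] at this
    exact this
  rw [abs_le]
  have h1 := key 1 (by simp)
  have h2 := key (-1) (by simp)
  constructor <;> linarith

/-- constant in the Hessian estimate -/
def hessC (n : ℕ) (p C₀ : ℝ) : ℝ := 8 * (2 * n + 1) * (4 + 8 * p * (2 * |C₀| + 1) ^ (p - 1))

lemma Sol.hessC_pos (S : Sol e Ω δ p β T M C₀ u G H u') : 0 < hessC n p C₀ := by
  have := S.hp
  unfold hessC; positivity

lemma Sol.hess (S : Sol e Ω δ p β T M C₀ u G H u') (g : Geo Ω δ δ₀ P ν) {x : E} (hx : x ∈ Ω) (hd : δ x ≤ 1/2)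
    (hdT : δ x ^ 2 ≤ T) {t : ℝ} (ht : t ∈ Icc (T/2) T) {k : E} (hk : ‖k‖ = 1) {m : ℝ}
    (hm : ∀ t' ∈ Icc (T/4) T, ∀ y ∈ Ω, dist y x ≤ δ x / 2 → δ x / 2 ≤ δ y → |⟪G y t', k⟫| ≤ m) :
    ‖H x t k‖ ≤ hessC n p C₀ * m / δ x := by
  have hpos := g.pos hx
  have hT := S.hT
  have hp := S.hp
  set d := δ x with hdd
  have hballd : ∀ y ∈ closedBall x (d/2), y ∈ Ω ∧ d/2 ≤ δ y ∧ δ y ≤ 1 := by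
    intro y hy
    rw [mem_closedBall] at hy
    have h1 := g.lip x y
    have h2 := g.lip y x
    rw [dist_comm] at h1
    refine ⟨g.ball_sub hx (mem_ball.2 (by linarith)), by linarith, by linarith⟩
  have htt : ∀ s ∈ Icc (t - (d/2)^2) t, s ∈ Icc (T/4) T := by
    intro s hs
    refine ⟨?_, hs.2.trans ht.2⟩
    have := hs.1; have := ht.1; nlinarith
  have htt' : ∀ s ∈ Icc (t - (d/2)^2) t, s ∈ Ioc 0 T := fun s hs =>
    ⟨lt_of_lt_of_le (by linarith) (htt s hs).1, (htt s hs).2⟩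
  have hsub : closedBall x (d/2) ×ˢ Icc (t - (d/2)^2) t ⊆ Ω ×ˢ Ioc 0 T := fun q hq => ⟨(hballd _ hq.1).1, htt' _ hq.2⟩
  set L0 := 2 * |C₀| + 1 with hL0d
  have hL0 : 0 < L0 := by positivity
  have hfin := hess_est e u G H u' x t (d/2) m (L0 * (d/2) ^ (-β)) (L0 ^ (p - 1)) p (by positivity) (by linarith)
    ((continuous_fst.comp_continuousOn S.hreg).mono hsub) (S.contH.mono hsub)
    (fun s hs y hy => S.hG2 s (htt' s hs) y (hballd y hy).1)
    (fun s hs y hy => S.hH s (htt' s hs) y (hballd y hy).1)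
    (fun s hs y hy => S.hu' s (htt' s hs) y (hballd y hy).1)
    (fun s hs y hy => S.hPDE s (htt' s hs) y (hballd y hy).1) k hk
    (fun s hs y hy => hm s (htt s hs) y (hballd y hy).1 hy (hballd y hy).2.1)
    (fun s hs y hy => by
      refine (S.gradB g (hballd y hy).1 (hballd y hy).2.2 (htt' s hs)).trans ?_
      have : δ y ^ (-β) ≤ (d/2) ^ (-β) := Real.rpow_le_rpow_of_nonpos (by positivity) (hballd y hy).2.1 (by linarith [S.b0])
      gcongr)
    (by
      rw [Real.mul_rpow hL0.le (by positivity), ← Real.rpow_mul (by positivity)]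
      have : -β * (p - 1) = -1 := by rw [neg_mul, S.bp]
      rw [this, Real.rpow_neg_one]
      apply le_of_eq; field_simp)
  refine hfin.trans (le_of_eq ?_)
  unfold hessC
  rw [← hL0d]; field_simp; ring

lemma Sol.hessB (S : Sol e Ω δ p β T M C₀ u G H u') (g : Geo Ω δ δ₀ P ν) {x : E} (hx : x ∈ Ω) (hd : δ x ≤ 1/2)
    (hdT : δ x ^ 2 ≤ T) {t : ℝ} (ht : t ∈ Icc (T/2) T) {k : E} (hk : ‖k‖ = 1) :
    ‖H x t k‖ ≤ hessC n p C₀ * (2 * (2 * |C₀| + 1)) * δ x ^ (-β - 1) := by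
  have hpos := g.pos hx
  have := S.hess g hx hd hdT ht hk (m := (2 * |C₀| + 1) * (2 * δ x ^ (-β))) (fun s hs y hy h1 h2 => by
    refine (abs_real_inner_le_norm _ _).trans ?_
    rw [hk, mul_one]
    have hT := S.hT
    have h3 := g.lip y x
    refine (S.gradB g hy (by linarith) ⟨by linarith [hs.1], hs.2⟩).trans ?_
    have := rpow_half_le S.b0 S.b1 hpos h2
    gcongr)
  refine this.trans (le_of_eq ?_)
  rw [Real.rpow_sub_one hpos.ne']
  field_simp

end Solution

section Tangential
variable {E : Type*} [NormedAddCommGroup E] [InnerProductSpace ℝ E] [FiniteDimensional ℝ E]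

lemma grad_scale {f : E → ℝ} {g b y : E} {c l : ℝ} (h : HasGradientAt f g (b + l • y)) :
    HasGradientAt (fun y => c * f (b + l • y)) ((c * l) • g) y := by
  rw [hasGradientAt_iff_hasFDerivAt] at *
  have h1 : HasFDerivAt (fun y : E => b + l • y) (l • ContinuousLinearMap.id ℝ E) y :=
    ((hasFDerivAt_id y).const_smul l).const_add b
  have h2 := (h.comp y h1).const_mul c
  refine h2.congr_fderiv ?_
  ext z
  simp [inner_smul_left, inner_smul_right]
  try ring

lemma field_scale {F : E → E} {A : E →L[ℝ] E} {b y : E} {k l : ℝ} (h : HasFDerivAt F A (b + l • y)) :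
    HasFDerivAt (fun y => k • F (b + l • y)) ((k * l) • A) y := by
  have h1 : HasFDerivAt (fun y : E => b + l • y) (l • ContinuousLinearMap.id ℝ E) y :=
    ((hasFDerivAt_id y).const_smul l).const_add b
  have h2 := (h.comp y h1).const_smul k
  refine h2.congr_fderiv ?_
  ext z
  simp [smul_smul]

lemma scaled_cmp {n : ℕ} (e : OrthonormalBasis (Fin n) ℝ E) (ν τ : E) (hν : ‖ν‖ = 1) (hτ : ‖τ‖ = 1) (hτν : ⟪τ, ν⟫ = 0)
    (a A R η p M' L m0 s : ℝ) (ha : 0 ≤ a) (ha1 : a ≤ 1) (hA1 : 1 ≤ A) (hR : 0 < R) (hη : 0 < η) (hp : 1 ≤ p)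
    (hL0 : 0 ≤ L) (hm0 : 0 ≤ m0) (hs : 0 ≤ s) (hs1 : s ≤ 1)
    (v : E → ℝ) (Gv : E → E) (Hv : E → E →L[ℝ] E) (f : E → ℝ)
    (h1 : ∀ y ∈ flatBox ν a A (R+1), HasGradientAt v (Gv y) y)
    (h2 : ∀ y ∈ flatBox ν a A (R+1), HasFDerivAt Gv (Hv y) y)
    (hpde : ∀ y ∈ flatBox ν a A (R+1), f y - ∑ i, ⟪Hv y (e i), e i⟫ = ‖Gv y‖ ^ p)
    (hf : ∀ y ∈ flatBox ν a A (R+1), |f y| ≤ M')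
    (hL : ∀ y ∈ flatBox ν a A (R+1), ‖Gv y‖ ≤ L)
    (hm : ∀ y ∈ flatBox ν a A (R+1), |v y| ≤ m0 / 2)
    (hbot : ∀ y ∈ flatBox ν a A (R+1), ⟪y, ν⟫ = a → |v y| ≤ η / 2)
    (htop : ∀ y ∈ flatBox ν a A (R+1), ⟪y, ν⟫ = A → ‖Gv y‖ ≤ η)
    (hcond : 2 * m0 * n / R^2 + 2 * (p * L ^ (p - 1)) * m0 / R + 2 * M' < η * Real.exp (-((p * L ^ (p - 1)+1) * A))) :
    v (ν + s • τ) - v ν ≤ 2 * η := by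
  have hinn : ∀ (y : E) (σ : ℝ), ⟪y + σ • τ, ν⟫ = ⟪y, ν⟫ := by
    intro y σ; rw [inner_add_left, inner_smul_left, hτν, mul_zero, add_zero]
  have hmem : ∀ y ∈ flatBox ν a A R, ∀ σ ∈ Icc (0:ℝ) s, y + σ • τ ∈ flatBox ν a A (R+1) := by
    intro y hy σ hσ
    refine ⟨by rw [hinn]; exact hy.1, ?_⟩
    rw [hinn, add_sub_right_comm]
    refine (norm_add_le _ _).trans (add_le_add hy.2 ?_)
    rw [norm_smul, hτ, mul_one, Real.norm_eq_abs, abs_of_nonneg hσ.1]; exact hσ.2.trans hs1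
  have hm1 : ∀ y ∈ flatBox ν a A R, y + s • τ ∈ flatBox ν a A (R+1) := fun y hy => hmem y hy s ⟨hs, le_rfl⟩
  have hm2 : ∀ y ∈ flatBox ν a A R, y ∈ flatBox ν a A (R+1) := fun y hy => ⟨hy.1, hy.2.trans (by linarith)⟩
  have hLp : 0 ≤ L ^ (p - 1) := Real.rpow_nonneg hL0 _
  refine flat_cmp e ν hν a A R η (p * L ^ (p - 1)) (2 * M') m0 ha ha1 hA1 hR hη (by positivity) hm0
    (fun y => v (y + s • τ) - v y) (fun y => Gv (y + s • τ) - Gv y) (fun y => Hv (y + s • τ) - Hv y)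
    (fun y hy => grad_sub (grad_shift (h1 _ (hm1 y hy))) (h1 _ (hm2 y hy)))
    (fun y hy => (field_shift (h2 _ (hm1 y hy))).sub (h2 _ (hm2 y hy))) ?_ ?_ ?_ hcond
  · intro y hy
    have e1 := hpde _ (hm1 y hy)
    have e2 := hpde _ (hm2 y hy)
    have e3 := abs_le.1 (hf _ (hm1 y hy))
    have e4 := abs_le.1 (hf _ (hm2 y hy))
    have e5 := abs_le.1 (rpow_norm_lip hp (hL _ (hm1 y hy)) (hL _ (hm2 y hy)))
    simp only [_root_.sub_apply, inner_sub_left, Finset.sum_sub_distrib]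
    linarith [e5.1, e5.2, e3.1, e3.2, e4.1, e4.2]
  · rintro y hy (h | h)
    · have e1 := abs_le.1 (hbot _ (hm1 y hy) (by rw [hinn]; exact h))
      have e2 := abs_le.1 (hbot _ (hm2 y hy) h)
      linarith [e1.2, e2.1]
    · have := mv_line (g := fun σ : ℝ => v (y + σ • τ)) (g' := fun σ => ⟪Gv (y + σ • τ), τ⟫) (m := η) hs
        (fun σ hσ => grad_line (h1 _ (hmem y hy σ hσ)))
        (fun σ hσ => by
          refine (norm_inner_le_norm _ _).trans ?_
          rw [hτ, mul_one]; exact htop _ (hmem y hy σ hσ) (by rw [hinn]; exact h))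
      simp only [zero_smul, add_zero] at this
      have h3 := (abs_le.1 this).2
      have : η * s ≤ η := by nlinarith
      linarith
  · intro y hy
    have e1 := abs_le.1 (hm _ (hm1 y hy))
    have e2 := abs_le.1 (hm _ (hm2 y hy))
    linarith [e1.2, e2.1]

variable {n : ℕ} {e : OrthonormalBasis (Fin n) ℝ E} {Ω : Set E} {δ : E → ℝ} {δ₀ : ℝ} {P ν : E → E} {p β T M C₀ : ℝ} {u : E → ℝ → ℝ} {G : E → ℝ → E}
    {H : E → ℝ → E →L[ℝ] E} {u' : E → ℝ → ℝ}

lemma small_pow {c κ : ℝ} (hc : 0 < c) (hκ : 0 < κ) : ∃ a > 0, a ≤ 1 ∧ a ^ c ≤ κ := by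
  refine ⟨min 1 (κ ^ (1 / c)), by positivity, min_le_left _ _, ?_⟩
  calc (min 1 (κ ^ (1 / c))) ^ c ≤ (κ ^ (1/c)) ^ c := by gcongr; exact min_le_right _ _
    _ = κ := by rw [← Real.rpow_mul hκ.le]; field_simp; simp

lemma exists_R {B q : ℝ} (n m0 K : ℝ) (hn : 0 ≤ n) (hm0 : 0 ≤ m0) (hK : 0 ≤ K) (hq : 0 < q) :
    ∃ R > 0, 2 * m0 * n / R^2 + 2 * K * m0 / R < q := by
  set N := 2 * m0 * n + 2 * K * m0 with hN
  have hN0 : 0 ≤ N := by positivity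
  refine ⟨1 + N / q, by positivity, ?_⟩
  set R := 1 + N / q with hR
  have hR1 : 1 ≤ R := by
    have : 0 ≤ N / q := by positivity
    linarith
  have h1 : 2 * m0 * n / R^2 ≤ 2 * m0 * n / R := by
    apply div_le_div_of_nonneg_left (by positivity) (by positivity); nlinarith
  have h2 : N / R < q := by
    rw [div_lt_iff₀ (by positivity), hR, mul_add, mul_div_cancel₀ _ hq.ne']; linarith
  have h3 : N / R = 2 * m0 * n / R + 2 * K * m0 / R := by rw [hN, add_div]
  linarith

set_option maxHeartbeats 1000000 in
lemma Sol.incr (S : Sol e Ω δ p β T M C₀ u G H u') (g : Geo Ω δ δ₀ P ν) {η : ℝ} (hη : 0 < η) :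
    ∃ l0 > 0, ∀ x ∈ Ω, δ x < l0 → δ x < δ₀ → ∀ t ∈ Icc (T/2) T, ∀ τ : E, ‖τ‖ = 1 → ⟪τ, ν x⟫ = 0 →
      ∀ s ∈ Icc (0:ℝ) 1, u (x + (s * δ x) • τ) t - u x t ≤ 2 * η * δ x ^ (1 - β) := by
  have hp := S.hp
  have hb0 := S.b0
  have hb1 := S.b1
  have hT := S.hT
  have hd0 := g.hδ₀
  set L0 := 2 * |C₀| + 1 with hL0d
  have hL0 : 0 < L0 := by positivity
  set L1 := L0 / (1 - β) with hL1d
  have hL1 : 0 < L1 := div_pos hL0 (by linarith)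
  obtain ⟨a, ha, ha1, hasm⟩ := small_pow (c := 1 - β) (κ := η / (4 * L1)) (by linarith) (by positivity)
  obtain ⟨A', hA', hA'1, hA'sm⟩ := small_pow (c := β) (κ := η / (2 * L0)) hb0 (by positivity)
  set A := A'⁻¹ with hAd
  have hA1 : 1 ≤ A := (one_le_inv₀ hA').2 hA'1
  have hAsm : A ^ (-β) ≤ η / (2 * L0) := by
    rw [hAd, Real.inv_rpow hA'.le, Real.rpow_neg hA'.le, inv_inv]; exact hA'sm
  set L := 2 * L0 * a ^ (-β) with hLd
  have hLpos : 0 < L := by positivity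
  set K := p * L ^ (p - 1) with hKd
  have hK : 0 ≤ K := by positivity
  set m0 := 4 * L1 * A ^ (1 - β) with hm0d
  have hm0 : 0 ≤ m0 := by positivity
  set q := η * Real.exp (-((K + 1) * A)) with hqd
  have hq : 0 < q := by positivity
  obtain ⟨R, hR, hRc⟩ := exists_R (B := 0) n m0 K (by positivity) hm0 hK (half_pos hq)
  obtain ⟨l1, hl1, hbox⟩ := g.box ha ha1 hA1 (by linarith : 0 < R + 1)
  refine ⟨min (min l1 (q / (2 * (2 * |M| + 1)))) (min 1 δ₀ / (2 * A)), by positivity, ?_⟩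
  intro x hx hxl hxd t ht τ hτ hτν s hs
  have hl := g.pos hx
  obtain ⟨hPf, _, _⟩ := g.hP x hx hxd
  have hrep := g.repr hx hxd
  rw [(g.hν2 x hx hxd).1] at hτν
  obtain ⟨hn, _⟩ := g.hν1 _ hPf
  set b := P x
  set l := δ x
  have hla : l < l1 := hxl.trans_le ((min_le_left _ _).trans (min_le_left _ _))
  have hlb : l * (2 * (2 * |M| + 1)) < q := by
    rw [← lt_div_iff₀ (by positivity)]; exact hxl.trans_le ((min_le_left _ _).trans (min_le_right _ _))
  have hlc : l * (2 * A) < min 1 δ₀ := by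
    rw [← lt_div_iff₀ (by positivity)]; exact hxl.trans_le (min_le_right _ _)
  have hl11 : l ≤ 1 := by
    have := hlc.trans_le (min_le_left _ _); nlinarith
  have htI : t ∈ Ioc 0 T := ⟨by linarith [ht.1], ht.2⟩
  have hB := hbox b hPf l hl hla
  set k := l ^ β with hkd
  have hk : 0 < k := by positivity
  set c := l ^ (β - 1) with hcd
  have hc : 0 < c := by positivity
  have hcl : c * l = k := by rw [hcd, Real.rpow_sub_one hl.ne', hkd]; field_simp
  have hkl : k * l = l ^ (β + 1) := by rw [Real.rpow_add_one hl.ne']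
  have hkp : k ^ p = k * l := by rw [hkd, ← Real.rpow_mul hl.le, S.bp2, Real.rpow_add_one hl.ne']
  -- information at the points of the box
  have hpt : ∀ y ∈ flatBox (ν b) a A (R+1), b + l • y ∈ Ω ∧ k * ‖G (b + l • y) t‖ ≤ 2 * L0 * ⟪y, ν b⟫ ^ (-β) ∧
      c * |u (b + l • y) t| ≤ 2 * L1 * ⟪y, ν b⟫ ^ (1 - β) := by
    intro y hy
    obtain ⟨h1, h2⟩ := hB y hy
    have h3 := abs_le.1 h2
    set z := ⟪y, ν b⟫ with hz
    have hz0 : 0 < z := ha.trans_le hy.1.1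
    have hzA : l * z ≤ l * A := mul_le_mul_of_nonneg_left hy.1.2 hl.le
    have h4 : δ (b + l • y) ≤ 2 * (l * z) := by nlinarith [h3.2]
    have h5 : l * z / 2 ≤ δ (b + l • y) := by linarith [h3.1]
    have hm1 : δ (b + l • y) < min 1 δ₀ := by linarith
    have h6 := hm1.trans_le (min_le_left _ _)
    have h7 := hm1.trans_le (min_le_right _ _)
    refine ⟨h1, ?_, ?_⟩
    · have h8 := S.gradB g h1 h6.le htI
      have h9 := rpow_half_le hb0 hb1 (mul_pos hl hz0) h5
      calc k * ‖G (b + l • y) t‖ ≤ k * (L0 * (2 * (l * z) ^ (-β))) := by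
            gcongr; exact h8.trans (by gcongr)
        _ = 2 * L0 * z ^ (-β) := by
          rw [Real.mul_rpow hl.le hz0.le, Real.rpow_neg hl.le, ← hkd]; field_simp
    · have h8 := S.uB g h1 h6.le h7 htI
      have h10 : δ (b + l • y) ^ (1 - β) ≤ 2 * (l * z) ^ (1 - β) := by
        calc δ (b + l • y) ^ (1 - β) ≤ (2 * (l * z)) ^ (1 - β) :=
              Real.rpow_le_rpow (g.nonneg _) h4 (by linarith)
          _ = 2 ^ (1 - β) * (l * z) ^ (1 - β) := Real.mul_rpow (by norm_num) (by positivity)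
          _ ≤ 2 * (l * z) ^ (1 - β) := by
            gcongr
            calc (2:ℝ) ^ (1 - β) ≤ 2 ^ (1:ℝ) := Real.rpow_le_rpow_of_exponent_le (by norm_num) (by linarith)
              _ = 2 := Real.rpow_one 2
      have hcc : c * l ^ (1 - β) = 1 := by
        rw [hcd, ← Real.rpow_add hl]; simp
      calc c * |u (b + l • y) t| ≤ c * (L1 * (2 * (l * z) ^ (1 - β))) := by
            gcongr; exact h8.trans (by gcongr)
        _ = (c * l ^ (1 - β)) * (2 * L1 * z ^ (1 - β)) := by
          rw [Real.mul_rpow hl.le hz0.le]; ring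
        _ = _ := by rw [hcc, one_mul]
  have hres := scaled_cmp e (ν b) τ hn hτ hτν a A R η p (|M| * l) L m0 s ha.le ha1 hA1 hR hη (by linarith) hLpos.le hm0 hs.1 hs.2
    (fun y => c * u (b + l • y) t) (fun y => k • G (b + l • y) t) (fun y => (k * l) • H (b + l • y) t)
    (fun y => (k * l) * u' (b + l • y) t)
    (fun y hy => by
      have := grad_scale (c := c) (S.hG2 t htI _ (hpt y hy).1)
      rwa [hcl] at this)
    (fun y hy => field_scale (S.hH t htI _ (hpt y hy).1))
    (fun y hy => by
      have := S.hPDE t htI _ (hpt y hy).1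
      simp only [_root_.smul_apply, inner_smul_left, conj_trivial, ← Finset.mul_sum]
      rw [norm_smul, Real.norm_eq_abs, abs_of_pos hk, Real.mul_rpow hk.le (norm_nonneg _), ← this, hkp]; ring)
    (fun y hy => by
      have := (S.hM _ (hpt y hy).1 t ht).trans (le_abs_self M)
      rw [abs_mul, abs_of_pos (by positivity : 0 < k * l)]
      have hk1 : k ≤ 1 := Real.rpow_le_one hl.le hl11 hb0.le
      calc k * l * |u' (b + l • y) t| ≤ 1 * l * |M| := by gcongr
        _ = |M| * l := by ring)
    (fun y hy => by
      rw [norm_smul, Real.norm_eq_abs, abs_of_pos hk]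
      refine (hpt y hy).2.1.trans ?_
      have : ⟪y, ν b⟫ ^ (-β) ≤ a ^ (-β) := Real.rpow_le_rpow_of_nonpos ha hy.1.1 (by linarith)
      rw [hLd]; gcongr)
    (fun y hy => by
      rw [abs_mul, abs_of_pos hc]
      refine (hpt y hy).2.2.trans ?_
      have : ⟪y, ν b⟫ ^ (1-β) ≤ A ^ (1-β) := Real.rpow_le_rpow (ha.le.trans hy.1.1) hy.1.2 (by linarith)
      rw [hm0d]; nlinarith)
    (fun y hy hz => by
      rw [abs_mul, abs_of_pos hc]
      refine (hpt y hy).2.2.trans ?_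
      rw [hz]
      calc 2 * L1 * a ^ (1 - β) ≤ 2 * L1 * (η / (4 * L1)) := by gcongr
        _ = η / 2 := by field_simp; ring)
    (fun y hy hz => by
      rw [norm_smul, Real.norm_eq_abs, abs_of_pos hk]
      refine (hpt y hy).2.1.trans ?_
      rw [hz]
      calc 2 * L0 * A ^ (-β) ≤ 2 * L0 * (η / (2 * L0)) := by gcongr
        _ = η := by field_simp)
    (by
      have : 2 * (|M| * l) < q / 2 := by nlinarith
      linarith)
  have e1 : b + l • ν b = x := hrep.symm
  have e2 : b + l • (ν b + s • τ) = x + (s * l) • τ := by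
    rw [smul_add, ← add_assoc, e1, smul_smul, mul_comm l s]
  simp only [e1, e2] at hres
  have hcc : l ^ (1 - β) * c = 1 := by
    rw [hcd, ← Real.rpow_add hl]; simp
  have h3 := mul_le_mul_of_nonneg_left hres (by positivity : 0 ≤ l ^ (1 - β))
  calc u (x + (s * l) • τ) t - u x t = (l ^ (1 - β) * c) * (u (x + (s * l) • τ) t - u x t) := by rw [hcc, one_mul]
    _ = l ^ (1 - β) * (c * u (x + (s * l) • τ) t - c * u x t) := by ring
    _ ≤ l ^ (1 - β) * (2 * η) := h3
    _ = _ := by ring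

lemma Sol.tang (S : Sol e Ω δ p β T M C₀ u G H u') (g : Geo Ω δ δ₀ P ν) {ε : ℝ} (hε : 0 < ε) :
    ∃ l0 > 0, ∀ x ∈ Ω, δ x < l0 → δ x < δ₀ → ∀ t ∈ Icc (T/2) T, ∀ τ : E, ‖τ‖ = 1 → ⟪τ, ν x⟫ = 0 →
      ⟪G x t, τ⟫ ≤ ε * δ x ^ (-β) := by
  have hp := S.hp
  have hb0 := S.b0
  have hb1 := S.b1
  have hT := S.hT
  have hd0 := g.hδ₀
  set C2 := hessC n p C₀ * (2 * (2 * |C₀| + 1)) with hC2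
  have hC2p : 0 < C2 := mul_pos S.hessC_pos (by positivity)
  set s := min (1/2) (ε / (8 * C2)) with hsd
  have hs0 : 0 < s := by positivity
  have hs1 : s ≤ 1/2 := min_le_left _ _
  have hs2 : 4 * C2 * s ≤ ε / 2 := by
    calc 4 * C2 * s ≤ 4 * C2 * (ε / (8 * C2)) := by gcongr; exact min_le_right _ _
      _ = ε / 2 := by field_simp; ring
  obtain ⟨l1, hl1, hinc⟩ := S.incr g (η := ε * s / 4) (by positivity)
  refine ⟨min l1 (min (1/4) T), by positivity, ?_⟩
  intro x hx hxl hxd t ht τ hτ hτν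
  have hl := g.pos hx
  have hla : δ x < l1 := hxl.trans_le (min_le_left _ _)
  have hlb : δ x < 1/4 := hxl.trans_le ((min_le_right _ _).trans (min_le_left _ _))
  have hlc : δ x < T := hxl.trans_le ((min_le_right _ _).trans (min_le_right _ _))
  have h1 := hinc x hx hla hxd t ht τ hτ hτν s ⟨hs0.le, by linarith⟩
  have htI : t ∈ Ioc 0 T := ⟨by linarith [ht.1], ht.2⟩
  set l := δ x with hld
  have hpt : ∀ σ ∈ Icc 0 (s * l), x + σ • τ ∈ Ω ∧ l / 2 ≤ δ (x + σ • τ) ∧ δ (x + σ • τ) ≤ 3/2 * l := by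
    intro σ hσ
    have hd1 : dist (x + σ • τ) x = σ := by
      rw [dist_eq_norm, add_sub_cancel_left, norm_smul, hτ, mul_one, Real.norm_eq_abs, abs_of_nonneg hσ.1]
    have hσ2 : σ ≤ l / 2 := by
      have := hσ.2; nlinarith
    have h2 := g.lip x (x + σ • τ)
    have h3 := g.lip (x + σ • τ) x
    rw [dist_comm] at h2
    refine ⟨g.ball_sub hx (by rw [mem_ball]; linarith), by linarith, by linarith⟩
  have hHb : ∀ σ ∈ Icc 0 (s * l), ‖H (x + σ • τ) t τ‖ ≤ 4 * C2 * l ^ (-β - 1) := by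
    intro σ hσ
    obtain ⟨k1, k2, k3⟩ := hpt σ hσ
    have := S.hessB g k1 (by linarith) (by nlinarith [g.nonneg (x + σ • τ)]) ht hτ
    refine this.trans ?_
    have h4 : δ (x + σ • τ) ^ (-β - 1) ≤ 4 * l ^ (-β - 1) := by
      have hpos := g.pos k1
      rw [Real.rpow_sub_one hpos.ne', Real.rpow_sub_one hl.ne']
      have h5 := rpow_half_le hb0 hb1 hl k2
      calc δ (x + σ • τ) ^ (-β) / δ (x + σ • τ) ≤ (2 * l ^ (-β)) / (l / 2) := by gcongr
        _ = 4 * (l ^ (-β) / l) := by field_simp; ring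
    calc _ ≤ C2 * (4 * l ^ (-β - 1)) := by gcongr
      _ = _ := by ring
  have hsl : 0 ≤ s * l := by positivity
  have hGd : ∀ σ ∈ Icc 0 (s * l), ‖G (x + σ • τ) t - G x t‖ ≤ 4 * C2 * l ^ (-β - 1) * (s * l) := by
    intro σ hσ
    have := mv_line (g := fun σ : ℝ => G (x + σ • τ) t) (g' := fun σ : ℝ => H (x + σ • τ) t τ) (h := σ) hσ.1
      (fun r hr => field_line (G := fun y => G y t) (S.hH t htI _ (hpt r ⟨hr.1, hr.2.trans hσ.2⟩).1))
      (fun r hr => hHb r ⟨hr.1, hr.2.trans hσ.2⟩)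
    simp only [zero_smul, add_zero] at this
    refine this.trans ?_
    have := hσ.2
    gcongr
  have hB : 4 * C2 * l ^ (-β - 1) * (s * l) ≤ ε / 2 * l ^ (-β) := by
    rw [Real.rpow_sub_one hl.ne']
    calc 4 * C2 * (l ^ (-β) / l) * (s * l) = (4 * C2 * s) * l ^ (-β) := by field_simp
      _ ≤ _ := by gcongr
  have hmv := mv_line (g := fun σ : ℝ => u (x + σ • τ) t - σ * ⟪G x t, τ⟫) (g' := fun σ : ℝ => ⟪G (x + σ • τ) t, τ⟫ - ⟪G x t, τ⟫)
    (m := ε / 2 * l ^ (-β)) hsl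
    (fun σ hσ => by
      have h2 := (grad_line (v := fun y => u y t) (S.hG2 t htI _ (hpt σ hσ).1)).sub ((hasDerivAt_id σ).mul_const ⟪G x t, τ⟫)
      refine h2.congr_deriv ?_
      rw [one_mul])
    (fun σ hσ => by
      rw [← inner_sub_left]
      refine (norm_inner_le_norm _ _).trans ?_
      rw [hτ, mul_one]; exact (hGd σ hσ).trans hB)
  simp only [zero_smul, add_zero, zero_mul, sub_zero] at hmv
  have h3 := (abs_le.1 hmv).1
  have h4 : l ^ (1 - β) = l * l ^ (-β) := by
    rw [sub_eq_add_neg, Real.rpow_add hl, Real.rpow_one]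
  rw [h4] at h1
  have h5 : (s * l) * ⟪G x t, τ⟫ ≤ (s * l) * (ε * l ^ (-β)) := by
    have : 2 * (ε * s / 4) * (l * l ^ (-β)) = (s * l) * (ε / 2 * l ^ (-β)) := by ring
    nlinarith
  exact le_of_mul_le_mul_left h5 (by positivity)

end Tangential

section Final
variable {E : Type*} [NormedAddCommGroup E] [InnerProductSpace ℝ E] [FiniteDimensional ℝ E]

lemma hess_symm {f : E → ℝ} {G : E → E} {A : E →L[ℝ] E} {x : E} (h1 : ∀ᶠ y in 𝓝 x, HasGradientAt f (G y) y)
    (h2 : HasFDerivAt G A x) (v w : E) : ⟪A v, w⟫ = ⟪A w, v⟫ := by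
  let J : E →L[ℝ] E →L[ℝ] ℝ := LinearMap.mkContinuous₂ (innerₗ E) 1 (fun a b => by
    simpa using norm_inner_le_norm (𝕜 := ℝ) a b)
  have hJ : ∀ a b, J a b = ⟪a, b⟫ := fun a b => rfl
  have h3 : HasFDerivAt (fun y => J (G y)) (J.comp A) x := J.hasFDerivAt.comp x h2
  have h4 : ∀ᶠ y in 𝓝 x, HasFDerivAt f (J (G y)) y := by
    filter_upwards [h1] with y hy
    refine hy.hasFDerivAt.congr_fderiv ?_
    ext z; simp [hJ]
  have := second_derivative_symmetric_of_eventually h4 h3 v w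
  simpa [hJ] using this

variable {n : ℕ} {e : OrthonormalBasis (Fin n) ℝ E} {Ω : Set E} {δ : E → ℝ} {δ₀ : ℝ} {P ν : E → E} {p β T M C₀ : ℝ} {u : E → ℝ → ℝ} {G : E → ℝ → E}
    {H : E → ℝ → E →L[ℝ] E} {u' : E → ℝ → ℝ}

lemma Sol.tang_abs (S : Sol e Ω δ p β T M C₀ u G H u') (g : Geo Ω δ δ₀ P ν) {ε : ℝ} (hε : 0 < ε) :
    ∃ l0 > 0, ∀ x ∈ Ω, δ x < l0 → δ x < δ₀ → ∀ t ∈ Icc (T/2) T, ∀ τ : E, ⟪τ, ν x⟫ = 0 →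
      |⟪G x t, τ⟫| ≤ ε * δ x ^ (-β) * ‖τ‖ := by
  obtain ⟨l0, hl0, h⟩ := S.tang g hε
  refine ⟨l0, hl0, fun x hx h1 h2 t ht τ hτ => ?_⟩
  by_cases h0 : τ = 0
  · simp [h0]
  have hn : 0 < ‖τ‖ := norm_pos_iff.2 h0
  have hu : ‖‖τ‖⁻¹ • τ‖ = 1 := by rw [norm_smul, norm_inv, norm_norm]; field_simp
  have hτe : ‖τ‖ • (‖τ‖⁻¹ • τ) = τ := by rw [smul_smul, mul_inv_cancel₀ hn.ne', one_smul]
  set k := ‖τ‖⁻¹ • τ with hk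
  have hkν : ⟪k, ν x⟫ = 0 := by rw [hk, inner_smul_left, hτ, mul_zero]
  have a1 := h x hx h1 h2 t ht k hu hkν
  have a2 := h x hx h1 h2 t ht (-k) (by rw [norm_neg, hu]) (by rw [inner_neg_left, hkν, neg_zero])
  rw [inner_neg_right] at a2
  have a3 : |⟪G x t, k⟫| ≤ ε * δ x ^ (-β) := abs_le.2 ⟨by linarith, a1⟩
  calc |⟪G x t, τ⟫| = |⟪G x t, ‖τ‖ • k⟫| := by rw [hτe]
    _ = |⟪G x t, k⟫| * ‖τ‖ := by rw [inner_smul_right, abs_mul, abs_norm, mul_comm]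
    _ ≤ _ := by gcongr

lemma Sol.hess_tang (S : Sol e Ω δ p β T M C₀ u G H u') (g : Geo Ω δ δ₀ P ν) {ε : ℝ} (hε : 0 < ε) :
    ∃ l0 > 0, ∀ x ∈ Ω, δ x < l0 → δ x < δ₀ → ∀ t ∈ Icc (T/2) T, ∀ τ : E, ‖τ‖ = 1 → ⟪τ, ν x⟫ = 0 →
      ‖H x t τ‖ ≤ ε * δ x ^ (-β - 1) := by
  have hp := S.hp
  have hb0 := S.b0
  have hb1 := S.b1
  have hT := S.hT
  have hd0 := g.hδ₀
  set C := hessC n p C₀ with hCd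
  have hC : 0 < C := S.hessC_pos
  set L0 := 2 * |C₀| + 1 with hL0d
  have hL0 : 0 < L0 := by positivity
  have hcc : IsCompact (closure Ω) := g.hb.isCompact_closure
  obtain ⟨Γ', hΓ'⟩ := (hcc.prod (isCompact_Icc (a := T/4) (b := T/2))).exists_bound_of_continuousOn
    (S.hG_cont.mono (prod_mono subset_rfl (fun s hs => ⟨by linarith [hs.1], by linarith [hs.2]⟩)))
  set Γ := |Γ'| with hΓd
  have hΓ0 : 0 ≤ Γ := abs_nonneg _
  have hΓ : ∀ y ∈ Ω, ∀ t ∈ Icc (T/4) (T/2), ‖G y t‖ ≤ Γ := fun y hy t ht =>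
    (hΓ' (y, t) ⟨subset_closure hy, ht⟩).trans (le_abs_self _)
  obtain ⟨l1, hl1, htan⟩ := S.tang_abs g (ε := ε / (8 * C)) (by positivity)
  obtain ⟨ρ, hρ, hνc⟩ := g.nu_uc (κ := ε / (8 * C * L0)) (by positivity)
  obtain ⟨a, ha, ha1, hasm⟩ := small_pow (c := β) (κ := ε / (2 * C * (Γ + 1))) hb0 (by positivity)
  refine ⟨min (min (l1/2) (ρ/3)) (min (min a (1/2)) (min T (δ₀/2))), by positivity, ?_⟩
  intro x hx hxl hxd t ht τ hτ hτν
  have hl := g.pos hx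
  have k1 : δ x < l1/2 := hxl.trans_le ((min_le_left _ _).trans (min_le_left _ _))
  have k2 : δ x < ρ/3 := hxl.trans_le ((min_le_left _ _).trans (min_le_right _ _))
  have k3 : δ x < a := hxl.trans_le ((min_le_right _ _).trans ((min_le_left _ _).trans (min_le_left _ _)))
  have k4 : δ x < 1/2 := hxl.trans_le ((min_le_right _ _).trans ((min_le_left _ _).trans (min_le_right _ _)))
  have k5 : δ x < T := hxl.trans_le ((min_le_right _ _).trans ((min_le_right _ _).trans (min_le_left _ _)))
  have k6 : δ x < δ₀/2 := hxl.trans_le ((min_le_right _ _).trans ((min_le_right _ _).trans (min_le_right _ _)))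
  set d := δ x with hdd
  have hmain := S.hess g hx k4.le (by nlinarith) ht hτ (m := ε / (2 * C) * d ^ (-β) + Γ) ?_
  · refine hmain.trans ?_
    have h1 : d ^ β ≤ ε / (2 * C * (Γ + 1)) := (Real.rpow_le_rpow hl.le k3.le hb0.le).trans hasm
    have h2 : C * Γ ≤ ε / 2 * d ^ (-β) := by
      rw [Real.rpow_neg hl.le, ← div_eq_mul_inv, le_div_iff₀ (by positivity)]
      calc C * Γ * d ^ β ≤ C * (Γ + 1) * (ε / (2 * C * (Γ + 1))) := by gcongr; linarith
        _ = ε / 2 := by field_simp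
    rw [← hCd, Real.rpow_sub_one hl.ne', mul_div_assoc']
    refine div_le_div_of_nonneg_right ?_ hl.le
    have h3 : C * (ε / (2 * C) * d ^ (-β) + Γ) = ε / 2 * d ^ (-β) + C * Γ := by field_simp
    rw [h3]; linarith
  · intro t' ht' y hy hyd hyd2
    have hdp : 0 < d ^ (-β) := by positivity
    rcases le_total t' (T/2) with h | h
    · refine (abs_real_inner_le_norm _ _).trans ?_
      rw [hτ, mul_one]
      have := hΓ y hy t' ⟨ht'.1, h⟩
      have : 0 ≤ ε / (2 * C) * d ^ (-β) := by positivity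
      linarith
    · have hyl := g.lip y x
      have hyd3 : δ y < δ₀ := by linarith
      have hgb := S.gradB g hy (by linarith) (t := t') ⟨by linarith, ht'.2⟩
      obtain ⟨p1, p2, _⟩ := g.hP x hx hxd
      obtain ⟨q1, q2, _⟩ := g.hP y hy hyd3
      have hyn := g.normP hy hyd3
      have hνν : ‖ν y - ν x‖ ≤ ε / (8 * C * L0) := by
        rw [(g.hν2 y hy hyd3).1, (g.hν2 x hx hxd).1]
        apply hνc _ q1 _ p1
        have r1 := dist_triangle4 (P y) y x (P x)
        rw [dist_comm (P y) y, q2, p2] at r1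
        linarith
      set α := ⟪τ, ν y⟫ with hα
      have hα1 : |α| ≤ ε / (8 * C * L0) := by
        have : α = ⟪τ, ν y - ν x⟫ := by rw [inner_sub_right, hτν, sub_zero]
        rw [this]
        refine (abs_real_inner_le_norm _ _).trans ?_
        rwa [hτ, one_mul]
      have hτ1 : ‖τ - α • ν y‖ ≤ 1 := by
        have := norm_tang_sq (y := τ) hyn
        rw [hτ, ← hα] at this
        nlinarith [sq_nonneg α, norm_nonneg (τ - α • ν y)]
      have ht1 := htan y hy (by linarith) hyd3 t' ⟨h, ht'.2⟩ (τ - α • ν y) (by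
        rw [inner_sub_left, inner_smul_left, real_inner_self_eq_norm_sq, hyn, ← hα]; simp)
      have hδp : 0 ≤ δ y ^ (-β) := Real.rpow_nonneg (g.nonneg y) _
      have ht2 : |⟪G y t', τ - α • ν y⟫| ≤ ε / (8 * C) * δ y ^ (-β) := by
        refine ht1.trans (mul_le_of_le_one_right (by positivity) hτ1)
      have ht3 : |α * ⟪G y t', ν y⟫| ≤ ε / (8 * C) * δ y ^ (-β) := by
        rw [abs_mul]
        have : |⟪G y t', ν y⟫| ≤ L0 * δ y ^ (-β) := by
          refine (abs_real_inner_le_norm _ _).trans ?_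
          rwa [hyn, mul_one]
        calc |α| * |⟪G y t', ν y⟫| ≤ ε / (8 * C * L0) * (L0 * δ y ^ (-β)) := by gcongr
          _ = _ := by field_simp
      have hdec : ⟪G y t', τ⟫ = ⟪G y t', τ - α • ν y⟫ + α * ⟪G y t', ν y⟫ := by
        rw [inner_sub_right, inner_smul_right]; ring
      have hhalf := rpow_half_le hb0 hb1 hl hyd2
      rw [hdec]
      refine (abs_add_le _ _).trans ?_
      have : ε / (8 * C) * δ y ^ (-β) ≤ ε / (8 * C) * (2 * d ^ (-β)) := by gcongr
      have e1 : ε / (8 * C) * (2 * d ^ (-β)) + ε / (8 * C) * (2 * d ^ (-β)) = ε / (2 * C) * d ^ (-β) := by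
        field_simp; ring
      linarith

lemma Sol.main (S : Sol e Ω δ p β T M C₀ u G H u') (g : Geo Ω δ δ₀ P ν) {ε : ℝ} (hε : 0 < ε) :
    ∃ C > 0, ∀ x ∈ Ω, δ x < δ₀ → ∀ t ∈ Icc (T / 2) T,
      ∀ τ τ' : E, ‖τ‖ = 1 → ‖τ'‖ = 1 → ⟪τ, ν x⟫ = 0 → ⟪τ', ν x⟫ = 0 →
        |⟪G x t, τ⟫| ^ p + |⟪H x t (ν x), τ⟫| + |⟪H x t τ', τ⟫| ≤ ε * (δ x) ^ (-(β * p)) + C := by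
  have hp := S.hp
  have hT := S.hT
  obtain ⟨ε₂, hε₂, _, hε₂p⟩ := small_pow (c := p) (κ := ε / 3) (by linarith) (by positivity)
  obtain ⟨l1, hl1, hA⟩ := S.tang_abs g hε₂
  obtain ⟨l2, hl2, hB⟩ := S.hess_tang g (ε := ε / 3) (by positivity)
  set l0 := min l1 l2 with hl0d
  have hl0 : 0 < l0 := by positivity
  have hK : IsCompact (closure Ω ∩ {x | l0 ≤ δ x}) :=
    g.hb.isCompact_closure.inter_right (isClosed_le continuous_const g.cont)
  have hKΩ : closure Ω ∩ {x | l0 ≤ δ x} ⊆ Ω := fun x hx => g.mem_of_closure hx.1 (lt_of_lt_of_le hl0 hx.2)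
  have hsub : (closure Ω ∩ {x | l0 ≤ δ x}) ×ˢ Icc (T/2) T ⊆ Ω ×ˢ Ioc 0 T :=
    prod_mono hKΩ fun s hs => ⟨by linarith [hs.1], hs.2⟩
  obtain ⟨B1, hB1⟩ := (hK.prod (isCompact_Icc (a := T/2) (b := T))).exists_bound_of_continuousOn (S.contG.mono hsub)
  obtain ⟨B2, hB2⟩ := (hK.prod (isCompact_Icc (a := T/2) (b := T))).exists_bound_of_continuousOn (S.contH.mono hsub)
  refine ⟨|B1| ^ p + 2 * |B2| + 1, by positivity, ?_⟩
  intro x hx hxd t ht τ τ' hτ hτ' hτν hτν'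
  have hl := g.pos hx
  have htI : t ∈ Ioc 0 T := ⟨by linarith [ht.1], ht.2⟩
  have hνn := g.normP hx hxd
  have hdp : 0 ≤ δ x ^ (-(β * p)) := by positivity
  rcases lt_or_ge (δ x) l0 with h | h
  · have h1 : δ x < l1 := h.trans_le (min_le_left _ _)
    have h2 : δ x < l2 := h.trans_le (min_le_right _ _)
    have hexp : -(β * p) = -β - 1 := by rw [S.bp2]; ring
    have a1 : |⟪G x t, τ⟫| ^ p ≤ ε / 3 * δ x ^ (-(β * p)) := by
      have := hA x hx h1 hxd t ht τ hτν
      rw [hτ, mul_one] at this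
      calc |⟪G x t, τ⟫| ^ p ≤ (ε₂ * δ x ^ (-β)) ^ p := Real.rpow_le_rpow (abs_nonneg _) this (by linarith)
        _ = ε₂ ^ p * δ x ^ (-(β * p)) := by
          rw [Real.mul_rpow hε₂.le (by positivity), ← Real.rpow_mul hl.le, neg_mul]
        _ ≤ _ := by gcongr
    have a2 : |⟪H x t (ν x), τ⟫| ≤ ε / 3 * δ x ^ (-(β * p)) := by
      rw [hess_symm (f := fun y => u y t) (G := fun y => G y t) (A := H x t) (x := x)
        (by filter_upwards [g.ho.mem_nhds hx] with y hy using S.hG2 t htI y hy) (S.hH t htI x hx), hexp]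
      refine (abs_real_inner_le_norm _ _).trans ?_
      rw [hνn, mul_one]
      exact hB x hx h2 hxd t ht τ hτ hτν
    have a3 : |⟪H x t τ', τ⟫| ≤ ε / 3 * δ x ^ (-(β * p)) := by
      rw [hexp]
      refine (abs_real_inner_le_norm _ _).trans ?_
      rw [hτ, mul_one]
      exact hB x hx h2 hxd t ht τ' hτ' hτν'
    have : 0 ≤ |B1| ^ p + 2 * |B2| + 1 := by positivity
    linarith
  · have hm : (x, t) ∈ (closure Ω ∩ {x | l0 ≤ δ x}) ×ˢ Icc (T/2) T := ⟨⟨subset_closure hx, h⟩, ht⟩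
    have b1 := (hB1 _ hm).trans (le_abs_self B1)
    have b2 := (hB2 _ hm).trans (le_abs_self B2)
    simp only at b1 b2
    have a1 : |⟪G x t, τ⟫| ^ p ≤ |B1| ^ p := by
      refine Real.rpow_le_rpow (abs_nonneg _) ?_ (by linarith)
      refine (abs_real_inner_le_norm _ _).trans ?_
      rwa [hτ, mul_one]
    have a2 : ∀ k : E, ‖k‖ = 1 → |⟪H x t k, τ⟫| ≤ |B2| := by
      intro k hk
      refine (abs_real_inner_le_norm _ _).trans ?_
      rw [hτ, mul_one]
      refine ((H x t).le_opNorm k).trans ?_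
      rwa [hk, mul_one]
    have a3 := a2 _ hνn
    have a4 := a2 _ hτ'
    have : 0 ≤ ε * δ x ^ (-(β * p)) := by positivity
    linarith

end Final

theorem stmt4 {n : ℕ} (hn : 1 ≤ n)
    -- the exponents and constants
    (p β cp dp : ℝ) (hp : 2 < p) (hβ : β = 1 / (p - 1))
    (hcp : cp = β ^ β / (1 - β)) (hdp : dp = β ^ β)
    -- the bounded domain Ω with C² boundary
    (Ω : Set (EuclideanSpace ℝ (Fin n))) (hΩo : IsOpen Ω) (hΩb : Bornology.IsBounded Ω) (hΩc2 : IsC2Boundary Ω)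
    -- the distance to the boundary
    (δ : EuclideanSpace ℝ (Fin n) → ℝ) (hδ : ∀ x, δ x = infDist x (frontier Ω))
    -- δ₀ and the boundary neighborhood Ωδ = {x ∈ Ω : δ(x) < δ₀}
    (δ₀ : ℝ) (hδ₀ : 0 < δ₀)
    (Ωδ : Set (EuclideanSpace ℝ (Fin n))) (hΩδ : Ωδ = {x ∈ Ω | δ x < δ₀})
    -- δ is C² on Ωδ
    (hδC2 : ContDiffOn ℝ 2 δ Ωδ)
    -- every x ∈ Ωδ has a unique nearest boundary point P x
    (P : EuclideanSpace ℝ (Fin n) → EuclideanSpace ℝ (Fin n))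
    (hP : ∀ x ∈ Ωδ, P x ∈ frontier Ω ∧ dist x (P x) = δ x ∧
      ∀ b ∈ frontier Ω, dist x b = δ x → b = P x)
    -- interior sphere condition of radius δ₀ at every boundary point
    (hsph : ∀ b ∈ frontier Ω, ∃ y, ball y δ₀ ⊆ Ω ∧ dist y b = δ₀)
    -- the inward unit normal field ν
    (ν : EuclideanSpace ℝ (Fin n) → EuclideanSpace ℝ (Fin n))
    (hν1 : ∀ b ∈ frontier Ω, ‖ν b‖ = 1 ∧
      ∀ s ∈ Ioo (0 : ℝ) δ₀, b + s • ν b ∈ Ω ∧ δ (b + s • ν b) = s)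
    (hν2 : ∀ x ∈ Ωδ, ν x = ν (P x) ∧ HasGradientAt δ (ν x) x)
    -- the solution u on [0,T], with spatial gradient G, spatial Hessian H and
    -- time derivative u'
    (T : ℝ) (hT : 0 < T)
    (u : EuclideanSpace ℝ (Fin n) → ℝ → ℝ)
    (G : EuclideanSpace ℝ (Fin n) → ℝ → EuclideanSpace ℝ (Fin n))
    (H : EuclideanSpace ℝ (Fin n) → ℝ → (EuclideanSpace ℝ (Fin n) →L[ℝ] EuclideanSpace ℝ (Fin n)))
    (u' : EuclideanSpace ℝ (Fin n) → ℝ → ℝ)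
    -- u is continuous on Ω̄ × [0,T] and vanishes on ∂Ω × [0,T]
    (hu_cont : ContinuousOn (fun q : EuclideanSpace ℝ (Fin n) × ℝ => u q.1 q.2) (closure Ω ×ˢ Icc 0 T))
    (hu_bd : ∀ b ∈ frontier Ω, ∀ t ∈ Icc (0 : ℝ) T, u b t = 0)
    -- u is continuously differentiable in x on Ω̄ × [0,T), with spatial gradient G
    (hG : ∀ t ∈ Ico (0 : ℝ) T, ∀ x ∈ closure Ω,
      HasGradientWithinAt (fun y => u y t) (G x t) (closure Ω) x)
    (hG_cont : ContinuousOn (fun q : EuclideanSpace ℝ (Fin n) × ℝ => G q.1 q.2) (closure Ω ×ˢ Ico 0 T))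
    -- on Ω × (0,T], u has spatial gradient G, spatial Hessian H and time derivative u',
    -- all continuous there
    (hG2 : ∀ t ∈ Ioc (0 : ℝ) T, ∀ x ∈ Ω, HasGradientAt (fun y => u y t) (G x t) x)
    (hH : ∀ t ∈ Ioc (0 : ℝ) T, ∀ x ∈ Ω, HasFDerivAt (fun y => G y t) (H x t) x)
    (hu' : ∀ t ∈ Ioc (0 : ℝ) T, ∀ x ∈ Ω, HasDerivAt (fun s => u x s) (u' x t) t)
    (hreg : ContinuousOn (fun q : EuclideanSpace ℝ (Fin n) × ℝ =>
      (u q.1 q.2, G q.1 q.2, H q.1 q.2, u' q.1 q.2)) (Ω ×ˢ Ioc 0 T))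
    -- the PDE uₜ - Δu = |∇u|^p on Ω × (0,T]
    (hPDE : ∀ t ∈ Ioc (0 : ℝ) T, ∀ x ∈ Ω,
      u' x t - ∑ i : Fin n, ⟪H x t (EuclideanSpace.single i (1 : ℝ)),
        EuclideanSpace.single i (1 : ℝ)⟫ = ‖G x t‖ ^ p)
    -- a priori bounds: |uₜ| ≤ M on Ω × [T/2,T] and the Bernstein estimate
    (M : ℝ) (hM : ∀ x ∈ Ω, ∀ t ∈ Icc (T / 2) T, |u' x t| ≤ M)
    (C₀ : ℝ) (hC₀ : ∀ x ∈ Ω, ∀ t ∈ Ico (0 : ℝ) T, ‖G x t‖ ≤ C₀ * ((δ x) ^ (-β) + 1))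
    :
    ∀ ε > 0, ∃ C > 0, ∀ x ∈ Ωδ, ∀ t ∈ Icc (T / 2) T,
      ∀ τ τ' : EuclideanSpace ℝ (Fin n), ‖τ‖ = 1 → ‖τ'‖ = 1 → ⟪τ, ν x⟫ = 0 → ⟪τ', ν x⟫ = 0 →
        |⟪G x t, τ⟫| ^ p + |⟪H x t (ν x), τ⟫| + |⟪H x t τ', τ⟫| ≤
          ε * (δ x) ^ (-(β * p)) + C := by
  intro ε hε
  by_cases hne : (frontier Ω).Nonempty
  · have g : Geo Ω δ δ₀ P ν :=
      { ho := hΩo, hb := hΩb, hne := hne, hδ := hδ, hδ₀ := hδ₀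
        hP := fun x hx h => hP x (by rw [hΩδ]; exact ⟨hx, h⟩)
        hν1 := hν1
        hν2 := fun x hx h => hν2 x (by rw [hΩδ]; exact ⟨hx, h⟩) }
    have S : Sol (EuclideanSpace.basisFun (Fin n) ℝ) Ω δ p β T M C₀ u G H u' :=
      { hp := hp, hβ := hβ, hT := hT, hu_cont := hu_cont, hu_bd := hu_bd, hG_cont := hG_cont
        hG2 := hG2, hH := hH, hu' := hu', hreg := hreg
        hPDE := fun t ht x hx => by
          simpa only [EuclideanSpace.basisFun_apply] using hPDE t ht x hx
        hM := hM, hC₀ := hC₀ }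
    obtain ⟨C, hC, h⟩ := S.main g hε
    refine ⟨C, hC, fun x hx t ht τ τ' h1 h2 h3 h4 => ?_⟩
    rw [hΩδ] at hx
    exact h x hx.1 hx.2 t ht τ τ' h1 h2 h3 h4
  · refine ⟨1, one_pos, fun x hx => ?_⟩
    exact absurd ⟨P x, (hP x hx).1⟩ hne
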